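/- Let d₀ ≥ 2, M = 𝕋^{d₀} = ℝ^{d₀}/ℤ^{d₀} with normalized Haar measure ν and the quotient metric d induced by the Euclidean metric, and let T be the ergodic algebraic automorphism of 𝕋^{d₀} induced by a matrix S ∈ SL_{d₀}(ℤ) none of whose eigenvalues is a root of unity. Fix η > 0. Then there exist assignments g ↦ K_g^{(1)}, g ↦ K_g^{(2)} (defined for all bounded g : M → ℂ, with values in [0,∞]), a constant c₀ > 0, a decreasing sequence (φ_n)_{n≥0}, a sequence κ_m = m^β for some β ≥ 0, an integer r ≥ 1 with sup_{n≥1} n⁶(1+κ_n)φ_{nr} < ∞, and a constant c > 0, such that points (1)–(6) of Hypothesis H hold and moreover K_g^{(1)} ≤ c·C_g^{(η)} and K_g^{(2)} ≤ c·C_g^{(η)} for every bounded g, where C_g^{(η)} := sup_{x≠y} |g(x)−g(y)|/d(x,y)^η is the η-Hölder constant of g. -/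

import Mathlib

open MeasureTheory ProbabilityTheory Filter

noncomputable section

/-- Number of visits of the walk `S` to site `k` among times `1,...,n` (local time). -/
def localTime {Ω : Type*} (S : ℕ → Ω → ℤ) (n : ℕ) (k : ℤ) (ω : Ω) : ℝ :=
  ((Finset.Icc 1 n).filter (fun j => S j ω = k)).card

/-- `S` is a simple symmetric random walk on `ℤ`: `S 0 = 0` and the increments are
i.i.d. uniform on `{-1, 1}`. -/
structure IsSSRW {Ω : Type*} [MeasurableSpace Ω] (μ : Measure Ω) (S : ℕ → Ω → ℤ) : Prop where
  meas : ∀ n, Measurable (S n)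
  init : ∀ ω, S 0 ω = 0
  indep : iIndepFun (fun n ω => S (n + 1) ω - S n ω) μ
  step_one : ∀ n, μ {ω | S (n + 1) ω - S n ω = 1} = 1 / 2
  step_neg_one : ∀ n, μ {ω | S (n + 1) ω - S n ω = -1} = 1 / 2

/-- Stationarity of the sequence `(ξ k)_{k ∈ ℤ}`: all finite dimensional distributions
are invariant under a shift of the index. -/
def IsStationarySeq {Ω : Type*} [MeasurableSpace Ω] (μ : Measure Ω) (ξ : ℤ → Ω → ℝ) : Prop :=
  ∀ (j : ℤ) (q : ℕ) (k : Fin q → ℤ),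
    Measure.map (fun ω i => ξ (k i + j) ω) μ = Measure.map (fun ω i => ξ (k i) ω) μ

/-- Covariance of two complex-valued random variables. -/
def covC {Ω : Type*} [MeasurableSpace Ω] (μ : Measure Ω) (U V : Ω → ℂ) : ℂ :=
  ∫ ω, U ω * V ω ∂μ - (∫ ω, U ω ∂μ) * (∫ ω, V ω ∂μ)

/-- Condition (3): `(ξ k)` is stationary, centered, with finite fourth moments. -/
def Cond3 {Ω : Type*} [MeasurableSpace Ω] (μ : Measure Ω) (ξ : ℤ → Ω → ℝ) : Prop :=
  IsStationarySeq μ ξ ∧ (∀ k, ∫ ω, ξ k ω ∂μ = 0) ∧ ∀ k, Integrable (fun ω => (ξ k ω) ^ 4) μ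

/-- Condition (4). -/
def Cond4 {Ω : Type*} [MeasurableSpace Ω] (μ : Measure Ω) (ξ : ℤ → Ω → ℝ) : Prop :=
  Summable (fun p : ℕ => Real.sqrt (1 + (p : ℝ)) * |∫ ω, ξ 0 ω * ξ (p : ℤ) ω ∂μ|) ∧
  ∃ B : ℝ, ∀ N : ℕ, 1 ≤ N →
    ∑ k₁ ∈ Finset.range N, ∑ k₂ ∈ Finset.range N, ∑ k₃ ∈ Finset.range N,
      ∑ k₄ ∈ Finset.range N,
        |∫ ω, ξ (k₁ : ℤ) ω * ξ (k₂ : ℤ) ω * ξ (k₃ : ℤ) ω * ξ (k₄ : ℤ) ω ∂μ| ≤ B * (N : ℝ) ^ 2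

/-- The covariance inequality of condition (5), for a given constant `C` and
family `φ`. -/
def Cond5Bound {Ω : Type*} [MeasurableSpace Ω] (μ : Measure Ω) (ξ : ℤ → Ω → ℝ)
    (C : ℝ) (φ : ℕ → ℕ → ℝ) : Prop :=
  ∀ n₁ n₂ n₃ n₄ : ℕ, n₁ ≤ n₂ → n₂ ≤ n₃ → n₃ ≤ n₄ → ∀ α β : ℕ → ℝ,
    ‖covC μ
        (fun ω => Complex.exp (Complex.I * ((∑ k ∈ Finset.Icc n₁ n₂, α k * ξ (k : ℤ) ω : ℝ) : ℂ)))
        (fun ω => Complex.exp (Complex.I * ((∑ k ∈ Finset.Icc n₃ n₄, β k * ξ (k : ℤ) ω : ℝ) : ℂ)))‖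
      ≤ C * (1 + ∑ k ∈ Finset.Icc n₁ n₂, |α k| + ∑ k ∈ Finset.Icc n₃ n₄, |β k|) *
          φ (n₃ - n₂) (n₄ - n₃)

/-- Condition (5). -/
def Cond5 {Ω : Type*} [MeasurableSpace Ω] (μ : Measure Ω) (ξ : ℤ → Ω → ℝ) : Prop :=
  ∃ C : ℝ, 0 < C ∧ ∃ (φ : ℕ → ℕ → ℝ) (r : ℕ), 1 ≤ r ∧
    (∀ p s, 0 ≤ φ p s) ∧ (∀ p s, φ (p + 1) s ≤ φ p s) ∧
    Tendsto (fun s : ℕ => Real.sqrt s * φ (r * s) s) atTop (nhds 0) ∧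
    Cond5Bound μ ξ C φ
open scoped ENNReal

/-- A complex-valued function is bounded. -/
def BddF {M : Type*} (g : M → ℂ) : Prop := ∃ c : ℝ, ∀ x, ‖g x‖ ≤ c

/-- The sup norm `‖g‖_∞` of a (bounded) function. -/
def supN {M : Type*} (g : M → ℂ) : ℝ := ⨆ x, ‖g x‖

/-- The iterate `T^k` for `k ∈ ℤ` of an invertible transformation `T`
with inverse `Tinv`. -/
def Titer {M : Type*} (T Tinv : M → M) : ℤ → M → M
  | Int.ofNat n => T^[n]
  | Int.negSucc n => Tinv^[n + 1]

/-- **Hypothesis H** for the invertible dynamical system `(M, ν, T)` (with inverse `Tinv`),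
with data `c₀`, `(φ_n)`, `(κ_m)`, `K¹`, `K²` and the integer `r`. -/
structure HypothesisH {M : Type*} [MeasurableSpace M] (ν : MeasureTheory.Measure M)
    (T Tinv : M → M) (c₀ : ℝ) (φ κ : ℕ → ℝ) (K1 K2 : (M → ℂ) → ℝ≥0∞) (r : ℕ) : Prop where
  measurable_T : Measurable T
  measurable_Tinv : Measurable Tinv
  left_inv : Function.LeftInverse Tinv T
  right_inv : Function.RightInverse Tinv T
  measurePreserving_T : MeasureTheory.MeasurePreserving T ν ν
  measurePreserving_Tinv : MeasureTheory.MeasurePreserving Tinv ν ν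
  c₀_pos : 0 < c₀
  /-- (1) covariance bound -/
  cov_bound : ∀ g h : M → ℂ, BddF g → BddF h → ∀ n : ℕ,
    ENNReal.ofReal ‖covC ν g (fun x => h (T^[n] x))‖ ≤
      ENNReal.ofReal (c₀ * φ n) *
        (ENNReal.ofReal (supN g * supN h) + ENNReal.ofReal (supN h) * K1 g +
          ENNReal.ofReal (supN g) * K2 h)
  /-- (2) behaviour of `K¹` under `T^{-m}` -/
  K1_comp : ∀ g : M → ℂ, BddF g → ∀ m : ℕ,
    K1 (fun x => g (Tinv^[m] x)) ≤ ENNReal.ofReal c₀ * K1 g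
  /-- (3) behaviour of `K²` under `T^k`, `0 ≤ k ≤ m` -/
  K2_comp : ∀ h : M → ℂ, BddF h → ∀ m k : ℕ, k ≤ m →
    K2 (fun x => h (T^[k] x)) ≤ ENNReal.ofReal c₀ * K2 h * ENNReal.ofReal (1 + κ m)
  /-- (4) `K¹` of a product -/
  K1_mul : ∀ g g' : M → ℂ, BddF g → BddF g' →
    K1 (fun x => g x * g' x) ≤
      ENNReal.ofReal (supN g) * K1 g' + ENNReal.ofReal (supN g') * K1 g
  /-- (5) `K²` of a product -/
  K2_mul : ∀ h h' : M → ℂ, BddF h → BddF h' →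
    K2 (fun x => h x * h' x) ≤
      ENNReal.ofReal (supN h) * K2 h' + ENNReal.ofReal (supN h') * K2 h
  /-- (6) `(φ_n)` is decreasing … -/
  φ_anti : ∀ n, φ (n + 1) ≤ φ n
  r_pos : 1 ≤ r
  /-- … and `sup_{n ≥ 1} n⁶ (1 + κ_n) φ_{n r} < ∞` -/
  sup_fin : ∃ B : ℝ, ∀ n : ℕ, 1 ≤ n → (n : ℝ) ^ 6 * (1 + κ n) * φ (n * r) ≤ B

/-- The `d`-dimensional torus `ℝ^d/ℤ^d`, realised as `(ℝ/ℤ)^d`; it carries the product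
(normalised Haar) measure `volume`. -/
abbrev Torus (d : ℕ) : Type := Fin d → AddCircle (1 : ℝ)

/-- The quotient metric on the torus induced by the Euclidean metric on `ℝ^d`
(here `‖·‖` is the quotient norm on `ℝ/ℤ`). -/
def torusDist {d : ℕ} (x y : Torus d) : ℝ := Real.sqrt (∑ i, ‖x i - y i‖ ^ 2)

/-- The algebraic endomorphism of the torus induced by an integer matrix `S`. -/
def torusAut {d : ℕ} (S : Matrix (Fin d) (Fin d) ℤ) (x : Torus d) : Torus d :=
  fun i => ∑ j, S i j • x j

/-- `S` has no eigenvalue which is a root of unity. -/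
def NoRootOfUnityEigenvalue {d : ℕ} (S : Matrix (Fin d) (Fin d) ℤ) : Prop :=
  ∀ z : ℂ, (Matrix.charpoly (S.map (fun a => (a : ℂ)))).IsRoot z →
    ∀ n : ℕ, n ≠ 0 → z ^ n ≠ 1

/-- The η-Hölder constant `C_g^{(η)}` of `g` (with value `∞` if `g` is not η-Hölder),
for the Euclidean quotient metric on the torus. -/
def holderC {d : ℕ} (η : ℝ) (g : Torus d → ℂ) : ℝ≥0∞ :=
  ⨆ (x : Torus d) (y : Torus d) (_ : x ≠ y),
    ENNReal.ofReal (‖g x - g y‖ / torusDist x y ^ η)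

/-- A real function on the torus is η-Hölder continuous (for the Euclidean quotient
metric). -/
def IsHolder {d : ℕ} (η : ℝ) (f : Torus d → ℝ) : Prop :=
  ∃ c : ℝ, ∀ x y : Torus d, |f x - f y| ≤ c * torusDist x y ^ η

section

/-! ### Unstable and centre-stable directions of integer matrices -/

open Polynomial Matrix

lemma exists_mulVec_bound {ι : Type*} [Fintype ι] [DecidableEq ι] (A : Matrix ι ι ℂ) :
    ∃ M : ℝ, 0 ≤ M ∧ ∀ x : ι → ℂ, ‖A *ᵥ x‖ ≤ M * ‖x‖ :=
  ⟨‖(Matrix.toLin' A).toContinuousLinearMap‖, norm_nonneg _, fun x =>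
    (Matrix.toLin' A).toContinuousLinearMap.le_opNorm x⟩

/-- Powers of `A` grow at most like `ρ ^ k` times a polynomial on the generalised eigenspace
belonging to eigenvalues of modulus at most `ρ`. -/
lemma norm_pow_mulVec_le {ι : Type*} [Fintype ι] [DecidableEq ι] (A : Matrix ι ι ℂ) {ρ : ℝ}
    (hρ : 0 < ρ) (s : Multiset ℂ) (hs : ∀ z ∈ s, ‖z‖ ≤ ρ) :
    ∃ K : ℝ, 0 ≤ K ∧ ∀ x : ι → ℂ,
      aeval A (s.map fun z => X - C z).prod *ᵥ x = 0 →
        ∀ k : ℕ, ‖(A ^ k) *ᵥ x‖ ≤ K * ρ ^ k * ((k : ℝ) + 1) ^ s.card * ‖x‖ := by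
  induction s using Multiset.induction with
  | empty =>
    refine ⟨0, le_rfl, fun x hx k => ?_⟩
    have : x = 0 := by simpa using hx
    simp [this]
  | cons a s ih =>
    obtain ⟨K, hK0, hK⟩ := ih fun z hz => hs z (Multiset.mem_cons_of_mem hz)
    have ha : ‖a‖ ≤ ρ := hs a (Multiset.mem_cons_self a s)
    obtain ⟨M, hM0, hM⟩ := exists_mulVec_bound (A - algebraMap ℂ _ a)
    set E : ℝ := K * M / ρ with hE
    have hE0 : 0 ≤ E := by positivity
    refine ⟨1 + E, by positivity, fun x hx k => ?_⟩
    set y := (A - algebraMap ℂ _ a) *ᵥ x with hy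
    have hy0 : aeval A (s.map fun z => X - C z).prod *ᵥ y = 0 := by
      rw [hy, Matrix.mulVec_mulVec, ← hx]
      congr 1
      rw [Multiset.map_cons, Multiset.prod_cons, mul_comm, map_mul]
      simp
    have hAx : A *ᵥ x = y + a • x := by
      rw [hy, Matrix.sub_mulVec]
      simp [Algebra.algebraMap_eq_smul_one, Matrix.smul_mulVec]
    have key : ∀ k : ℕ, ‖(A ^ k) *ᵥ x‖ ≤
        ρ ^ k * (1 + k * E * ((k : ℝ) + 1) ^ s.card) * ‖x‖ := by
      intro k
      induction k with
      | zero => simp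
      | succ k ihk =>
        have h1 : (A ^ (k + 1)) *ᵥ x = (A ^ k) *ᵥ y + a • ((A ^ k) *ᵥ x) := by
          rw [pow_succ, ← Matrix.mulVec_mulVec, hAx, Matrix.mulVec_add, Matrix.mulVec_smul]
        have h2 : ‖(A ^ k) *ᵥ y‖ ≤ K * ρ ^ k * ((k : ℝ) + 1) ^ s.card * (M * ‖x‖) :=
          (hK y hy0 k).trans (by gcongr; exact hM x)
        have h3 : ‖a • ((A ^ k) *ᵥ x)‖ ≤
            ρ * (ρ ^ k * (1 + k * E * ((k : ℝ) + 1) ^ s.card) * ‖x‖) := by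
          rw [norm_smul]; gcongr
        have hKM : K * M = E * ρ := by rw [hE]; field_simp
        calc ‖(A ^ (k + 1)) *ᵥ x‖
            ≤ K * ρ ^ k * ((k : ℝ) + 1) ^ s.card * (M * ‖x‖) +
              ρ * (ρ ^ k * (1 + k * E * ((k : ℝ) + 1) ^ s.card) * ‖x‖) := by
                rw [h1]; exact (norm_add_le _ _).trans (add_le_add h2 h3)
          _ = ρ ^ (k + 1) * (1 + (k + 1) * E * ((k : ℝ) + 1) ^ s.card) * ‖x‖ := by
            linear_combination (ρ ^ k * ((k : ℝ) + 1) ^ s.card * ‖x‖) * hKM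
          _ ≤ _ := by push_cast; gcongr; linarith
    refine (key k).trans ?_
    rw [Multiset.card_cons]
    have h4 : (1 : ℝ) ≤ ((k : ℝ) + 1) ^ (s.card + 1) := one_le_pow₀ (by simp)
    have h5 : k * E * ((k : ℝ) + 1) ^ s.card ≤ E * ((k : ℝ) + 1) ^ (s.card + 1) := by
      rw [pow_succ]
      nlinarith [mul_nonneg hE0 (pow_nonneg (show (0 : ℝ) ≤ k + 1 by positivity) s.card)]
    calc _ ≤ ρ ^ k * (((k : ℝ) + 1) ^ (s.card + 1) + E * ((k : ℝ) + 1) ^ (s.card + 1)) * ‖x‖ := by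
          gcongr
      _ = _ := by ring

lemma aeval_prod_inv {ι : Type*} [Fintype ι] [DecidableEq ι] {A B : Matrix ι ι ℂ}
    (hBA : B * A = 1) (s : Multiset ℂ) (hs : ∀ z ∈ s, z ≠ 0) :
    ∃ Y : Matrix ι ι ℂ, aeval B ((s.map fun z => z⁻¹).map fun z => X - C z).prod =
      Y * aeval A (s.map fun z => X - C z).prod := by
  have hAB : A * B = 1 := mul_eq_one_comm.mp hBA
  suffices ∃ c : ℂ, aeval B ((s.map fun z => z⁻¹).map fun z => X - C z).prod =
      (c • B ^ s.card) * aeval A (s.map fun z => X - C z).prod from this.imp' _ fun _ h => h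
  induction s using Multiset.induction with
  | empty => exact ⟨1, by simp⟩
  | cons a s ih =>
    obtain ⟨c, hc⟩ := ih fun z hz => hs z (Multiset.mem_cons_of_mem hz)
    have ha : a ≠ 0 := hs a (Multiset.mem_cons_self a s)
    refine ⟨-a⁻¹ * c, ?_⟩
    have h1 : B - algebraMap ℂ _ a⁻¹ = (-a⁻¹) • (B * (A - algebraMap ℂ _ a)) := by
      rw [mul_sub, hBA]
      simp only [Algebra.algebraMap_eq_smul_one, mul_smul_comm, mul_one, smul_sub, smul_smul]
      rw [neg_mul, inv_mul_cancel₀ ha]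
      simp only [neg_smul, one_smul]; abel
    have h2 : Commute (A - algebraMap ℂ _ a) (B ^ s.card) := by
      refine Commute.pow_right (Commute.sub_left ?_ (Algebra.commute_algebraMap_left _ _)) _
      rw [commute_iff_eq, hAB, hBA]
    simp only [Multiset.map_cons, Multiset.prod_cons, map_mul, hc, Multiset.card_cons,
      map_sub, aeval_X, aeval_C]
    rw [h1]
    simp only [smul_mul_assoc, mul_smul_comm, smul_smul]
    rw [mul_comm c, pow_succ', ← mul_assoc, ← mul_assoc, mul_assoc B, h2.eq]
    simp only [mul_assoc]

/-- Kronecker's theorem for a factor of a monic integer polynomial none of whose roots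
is zero or a root of unity. -/
lemma exists_root_one_lt_norm {P : ℤ[X]} (hP : P.Monic)
    (hroot : ∀ z : ℂ, aeval z P = 0 → z ≠ 0 ∧ ∀ n : ℕ, n ≠ 0 → z ^ n ≠ 1)
    {f : ℚ[X]} (hf : f.degree ≠ 0) (hfP : f ∣ P.map (Int.castRingHom ℚ)) :
    ∃ z : ℂ, aeval z f = 0 ∧ 1 < ‖z‖ := by
  by_contra! hcon
  obtain ⟨z, hz⟩ := IsAlgClosed.exists_aeval_eq_zero ℂ f hf
  have hPz : ∀ w : ℂ, aeval w f = 0 → aeval w P = 0 := by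
    intro w hw
    obtain ⟨g, hg⟩ := hfP
    have : aeval w (P.map (Int.castRingHom ℚ)) = 0 := by rw [hg, map_mul, hw, zero_mul]
    rwa [← algebraMap_int_eq, aeval_map_algebraMap] at this
  have hint : IsIntegral ℤ z := ⟨P, hP, by simpa [aeval_def] using hPz z hz⟩
  have hintQ : IsIntegral ℚ z := hint.tower_top
  let F := IntermediateField.adjoin ℚ {z}
  have : FiniteDimensional ℚ F := IntermediateField.adjoin.finiteDimensional hintQ
  have : NumberField F := {}
  let y : F := IntermediateField.AdjoinSimple.gen ℚ z
  have hyz : algebraMap F ℂ y = z := IntermediateField.AdjoinSimple.algebraMap_gen ℚ z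
  have hy0 : y ≠ 0 := by
    intro h; apply (hroot z (hPz z hz)).1; rw [← hyz, h, map_zero]
  have hyint : IsIntegral ℤ y := by
    rw [← isIntegral_algebraMap_iff (algebraMap F ℂ).injective, hyz]; exact hint
  have hfy : aeval y f = 0 := by
    apply (algebraMap F ℂ).injective
    rw [← aeval_algebraMap_apply, hyz, hz, map_zero]
  obtain ⟨n, hn, hyn⟩ := NumberField.Embeddings.pow_eq_one_of_norm_le_one F ℂ hy0 hyint
    (fun φ => hcon _ (by
      have := congrArg φ.toRatAlgHom hfy
      rw [map_zero, ← aeval_algHom_apply] at this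
      exact this))
  refine (hroot z (hPz z hz)).2 n hn.ne' ?_
  rw [← hyz, ← map_pow, hyn, map_one]

/-- The monic generator of the ideal of polynomials annihilating a vector. -/
lemma exists_monic_annihilator {ι : Type*} [Fintype ι] [DecidableEq ι] (N : Matrix ι ι ℚ)
    {q : ι → ℚ} (hq : q ≠ 0) :
    ∃ f : ℚ[X], f.Monic ∧ 0 < f.natDegree ∧ aeval N f *ᵥ q = 0 ∧ f ∣ N.charpoly ∧
      ∀ g : ℚ[X], g.degree < f.degree → aeval N g *ᵥ q = 0 → g = 0 := by
  let I : Ideal ℚ[X] :=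
    { carrier := {g | aeval N g *ᵥ q = 0}
      add_mem' := fun {a b} ha hb => by
        simp only [Set.mem_ofPred_eq] at *
        rw [map_add, Matrix.add_mulVec, ha, hb, add_zero]
      zero_mem' := by simp
      smul_mem' := fun c x hx => by
        simp only [Set.mem_ofPred_eq, smul_eq_mul] at *
        rw [map_mul, ← Matrix.mulVec_mulVec, hx, Matrix.mulVec_zero] }
  have hI : ∀ g, g ∈ I ↔ aeval N g *ᵥ q = 0 := fun g => Iff.rfl
  have hch : N.charpoly ∈ I := by rw [hI, Matrix.aeval_self_charpoly, Matrix.zero_mulVec]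
  set f0 := Submodule.IsPrincipal.generator I with hf0
  have hmem : ∀ g, g ∈ I ↔ f0 ∣ g := fun g => Submodule.IsPrincipal.mem_iff_generator_dvd I
  have hf00 : f0 ≠ 0 := by
    intro h
    have := (hmem _).1 hch
    rw [h, zero_dvd_iff] at this
    exact (Matrix.charpoly_monic N).ne_zero this
  have hass : ∀ g, g ∈ I ↔ normalize f0 ∣ g := fun g => by rw [hmem, normalize_dvd_iff]
  have hmon : (normalize f0).Monic := Polynomial.monic_normalize hf00
  refine ⟨normalize f0, hmon, ?_, (hI _).1 ((hass _).2 dvd_rfl), (hass _).1 hch,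
    fun g hg hgq => Polynomial.eq_zero_of_dvd_of_degree_lt ((hass _).1 ((hI g).2 hgq)) hg⟩
  refine Nat.pos_of_ne_zero fun h => hq ?_
  have h1 : (1 : ℚ[X]) ∈ I := by rw [hass, hmon.natDegree_eq_zero.1 h]
  simpa [hI] using h1

lemma one_le_abs_det_gram {ι κ : Type*} [Fintype ι] [Fintype κ] [DecidableEq κ]
    (K : Matrix ι κ ℤ)
    (hK : ∀ v : κ → ℚ, (K.map (fun a => (a : ℚ))) *ᵥ v = 0 → v = 0) :
    1 ≤ |(Kᵀ * K).det| := by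
  refine Int.one_le_abs fun h => ?_
  set KQ := K.map (fun a => (a : ℚ)) with hKQ
  have h1 : (KQᵀ * KQ).det = 0 := by
    have h2 : KQᵀ * KQ = (Int.castRingHom ℚ).mapMatrix (Kᵀ * K) := by
      ext i j; simp [hKQ, Matrix.mul_apply]
    rw [h2, ← RingHom.map_det, h, map_zero]
  obtain ⟨v, hv, hv0⟩ := Matrix.exists_mulVec_eq_zero_iff.2 h1
  apply hv
  apply hK
  rw [← dotProduct_self_eq_zero, Matrix.dotProduct_mulVec, ← Matrix.mulVec_transpose,
    Matrix.mulVec_mulVec, hv0, zero_dotProduct]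

lemma norm_aeval_prod_mulVec_le {ι : Type*} [Fintype ι] [DecidableEq ι] {A : Matrix ι ι ℂ}
    {M R : ℝ} (hM0 : 0 ≤ M) (hM : ∀ x : ι → ℂ, ‖A *ᵥ x‖ ≤ M * ‖x‖) (s : Multiset ℂ)
    (hs : ∀ z ∈ s, ‖z‖ ≤ R) (hR : 0 ≤ R) (x : ι → ℂ) :
    ‖aeval A (s.map fun z => X - C z).prod *ᵥ x‖ ≤ (M + R) ^ s.card * ‖x‖ := by
  induction s using Multiset.induction with
  | empty => simp
  | cons a s ih =>
    have ih := ih fun z hz => hs z (Multiset.mem_cons_of_mem hz)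
    have ha := hs a (Multiset.mem_cons_self a s)
    set y := aeval A (s.map fun z => X - C z).prod *ᵥ x
    have h1 : aeval A ((a ::ₘ s).map fun z => X - C z).prod *ᵥ x = A *ᵥ y - a • y := by
      rw [Multiset.map_cons, Multiset.prod_cons, map_mul, ← Matrix.mulVec_mulVec, map_sub, aeval_X,
        aeval_C, Matrix.sub_mulVec, Algebra.algebraMap_eq_smul_one, Matrix.smul_mulVec,
        Matrix.one_mulVec]
    rw [h1, Multiset.card_cons, pow_succ']
    calc ‖A *ᵥ y - a • y‖ ≤ ‖A *ᵥ y‖ + ‖a • y‖ := norm_sub_le _ _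
      _ ≤ M * ‖y‖ + R * ‖y‖ := by
        rw [norm_smul]; gcongr; exact hM y
      _ = (M + R) * ‖y‖ := by ring
      _ ≤ (M + R) * ((M + R) ^ s.card * ‖x‖) := by gcongr
      _ = _ := by ring

lemma norm_det_le_of_column {κ : Type*} [Fintype κ] [DecidableEq κ] (G : Matrix κ κ ℂ)
    (j₀ : κ) {x y : ℝ} (hx : ∀ i, ∀ j ≠ j₀, ‖G i j‖ ≤ x) (hy : ∀ i, ‖G i j₀‖ ≤ y) :
    ‖G.det‖ ≤ (Fintype.card κ).factorial * (x ^ (Fintype.card κ - 1) * y) := by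
  have h1 : ∀ σ : Equiv.Perm κ, ‖Equiv.Perm.sign σ • ∏ i, G (σ i) i‖ ≤
      x ^ (Fintype.card κ - 1) * y := by
    intro σ
    have h2 : ‖Equiv.Perm.sign σ • ∏ i, G (σ i) i‖ = ∏ i, ‖G (σ i) i‖ := by
      rcases Int.units_eq_one_or (Equiv.Perm.sign σ) with h | h <;> simp [h, Units.smul_def]
    rw [h2, ← Finset.prod_erase_mul _ _ (Finset.mem_univ j₀)]
    have h3 : ∏ i ∈ Finset.univ.erase j₀, ‖G (σ i) i‖ ≤ x ^ (Fintype.card κ - 1) := by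
      refine (Finset.prod_le_prod (fun _ _ => norm_nonneg _) fun i hi =>
        hx (σ i) i (Finset.ne_of_mem_erase hi)).trans_eq ?_
      rw [Finset.prod_const, Finset.card_erase_of_mem (Finset.mem_univ _), Finset.card_univ]
    exact mul_le_mul h3 (hy _) (norm_nonneg _)
      ((Finset.prod_nonneg fun _ _ => norm_nonneg _).trans h3)
  rw [Matrix.det_apply]
  refine (norm_sum_le _ _).trans ((Finset.sum_le_sum fun σ _ => h1 σ).trans_eq ?_)
  rw [Finset.sum_const, Finset.card_univ, Fintype.card_perm, nsmul_eq_mul]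

lemma aeval_mulVec_of_eigenvector {ι : Type*} [Fintype ι] [DecidableEq ι] {A : Matrix ι ι ℂ}
    {z : ℂ} {e : ι → ℂ} (he : aeval A (X - C z) *ᵥ e = 0) (p : ℂ[X]) :
    aeval A p *ᵥ e = p.eval z • e := by
  obtain ⟨g, hg⟩ := X_sub_C_dvd_sub_C_eval (a := z) (p := p)
  have h1 : p = g * (X - C z) + C (p.eval z) := by rw [mul_comm, ← hg]; ring
  conv_lhs => rw [h1]
  rw [map_add, map_mul, Matrix.add_mulVec, ← Matrix.mulVec_mulVec, he, Matrix.mulVec_zero,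
    zero_add, aeval_C, Algebra.algebraMap_eq_smul_one, Matrix.smul_mulVec, Matrix.one_mulVec]

lemma one_le_norm_intCast {ι : Type*} [Fintype ι] {q : ι → ℤ} (hq : q ≠ 0) :
    1 ≤ ‖fun i => (q i : ℂ)‖ := by
  obtain ⟨i, hi⟩ := Function.ne_iff.1 hq
  refine le_trans ?_ (norm_le_pi_norm (fun i => (q i : ℂ)) i)
  rw [Complex.norm_intCast]
  exact_mod_cast Int.one_le_abs hi

lemma aeval_mulVec_eq_sum {R : Type*} [CommRing R] {ι : Type*} [Fintype ι] [DecidableEq ι]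
    (A : Matrix ι ι R) {p : R[X]} {m : ℕ} (hp : p.natDegree < m) (x : ι → R) (l : ι) :
    (aeval A p *ᵥ x) l = ∑ i : Fin m, p.coeff i * ((A ^ (i : ℕ)) *ᵥ x) l := by
  rw [aeval_eq_sum_range' hp, ← Fin.sum_univ_eq_sum_range (fun i => p.coeff i • A ^ i) m,
    Matrix.sum_mulVec, Finset.sum_apply]
  simp [Matrix.smul_mulVec]

/-- A nonzero integer vector is polynomially far from the kernel of `p(N)` when `p` does not vanish
at the eigenvalues of modulus larger than one. -/
lemma exists_diophantine_bound {ι : Type*} [Fintype ι] [DecidableEq ι] (N : Matrix ι ι ℤ)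
    (hroot : ∀ z : ℂ, aeval z N.charpoly = 0 → z ≠ 0 ∧ ∀ n : ℕ, n ≠ 0 → z ^ n ≠ 1)
    (p : ℂ[X]) (hp : ∀ z : ℂ, aeval z N.charpoly = 0 → 1 < ‖z‖ → p.eval z ≠ 0) :
    ∃ K : ℝ, 0 ≤ K ∧ ∀ q : ι → ℤ, q ≠ 0 →
      1 ≤ K * ‖fun i => (q i : ℂ)‖ ^ (2 * Fintype.card ι) *
        ‖aeval (N.map (fun a => (a : ℂ))) p *ᵥ (fun i => (q i : ℂ))‖ := by
  set A : Matrix ι ι ℂ := N.map (fun a => (a : ℂ)) with hA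
  set d := Fintype.card ι with hd
  obtain ⟨M, hM0, hM⟩ := exists_mulVec_bound A
  have hfin : {z : ℂ | aeval z N.charpoly = 0}.Finite := by
    refine Set.Finite.subset (N.charpoly.aroots ℂ).toFinset.finite_toSet fun z hz => ?_
    simp only [Finset.mem_coe, Multiset.mem_toFinset]
    exact (mem_aroots.2 ⟨(charpoly_monic N).ne_zero, hz⟩)
  obtain ⟨R, hR⟩ := (hfin.image (fun z => ‖z‖)).bddAbove
  replace hR : ∀ z : ℂ, aeval z N.charpoly = 0 → ‖z‖ ≤ max R 0 := fun z hz =>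
    (hR ⟨z, hz, rfl⟩).trans (le_max_left _ _)
  obtain ⟨δ', hδ'⟩ := (hfin.image (fun z => ‖p.eval z‖⁻¹)).bddAbove
  replace hδ' : ∀ z : ℂ, aeval z N.charpoly = 0 → ‖p.eval z‖⁻¹ ≤ max δ' 0 := fun z hz =>
    (hδ' ⟨z, hz, rfl⟩).trans (le_max_left _ _)
  set L := M + max R 0 + 1 with hL
  set δ := max δ' 0
  have hR0 : 0 ≤ max R 0 := le_max_right _ _
  have hδ0 : 0 ≤ δ := le_max_right _ _
  have hL1 : 1 ≤ L := by linarith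
  refine ⟨d.factorial * ((d * (L ^ d * L ^ d)) ^ d * (d * L ^ d * (δ * L ^ d))), by positivity,
    fun q hq => ?_⟩
  set x : ι → ℂ := fun i => (q i : ℂ) with hx
  have hQ1 : 1 ≤ ‖x‖ := one_le_norm_intCast hq
  have hd1 : 1 ≤ d := by
    obtain ⟨i, hi⟩ := Function.ne_iff.1 hq
    exact Fintype.card_pos_iff.2 ⟨i⟩
  set NQ : Matrix ι ι ℚ := N.map (fun a => (a : ℚ)) with hNQ
  have hNQch : NQ.charpoly = N.charpoly.map (Int.castRingHom ℚ) :=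
    Matrix.charpoly_map N (Int.castRingHom ℚ)
  have hqQ : (fun i => (q i : ℚ)) ≠ 0 := fun h => hq (by
    ext i; have := congrFun h i; simpa using this)
  obtain ⟨f, hfm, hfd, hfq, hfch, hfmin⟩ := exists_monic_annihilator NQ hqQ
  rw [hNQch] at hfch
  obtain ⟨z, hzf, hz1⟩ := exists_root_one_lt_norm (charpoly_monic N) hroot
    (fun h => by rw [natDegree_eq_of_degree_eq_some h] at hfd; exact lt_irrefl _ hfd) hfch
  have hPz : ∀ w : ℂ, aeval w f = 0 → aeval w N.charpoly = 0 := by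
    intro w hw
    obtain ⟨g, hg⟩ := hfch
    have : aeval w (N.charpoly.map (Int.castRingHom ℚ)) = 0 := by rw [hg, map_mul, hw, zero_mul]
    rwa [← algebraMap_int_eq, aeval_map_algebraMap] at this
  set m := f.natDegree with hm
  have hmd : m ≤ d := by
    have h1 := natDegree_le_of_dvd hfch ((charpoly_monic N).map _).ne_zero
    rwa [(charpoly_monic N).natDegree_map, charpoly_natDegree_eq_dim] at h1
  -- integral Krylov matrix
  let K : Matrix ι (Fin m) ℤ := Matrix.of fun i j => ((N ^ (j : ℕ)) *ᵥ q) i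
  have hKC : ∀ i (j : Fin m), ((K i j : ℤ) : ℂ) = ((A ^ (j : ℕ)) *ᵥ x) i := by
    intro i j
    have h1 := RingHom.map_mulVec (Int.castRingHom ℂ) (N ^ (j : ℕ)) q i
    rw [Matrix.map_pow] at h1
    exact h1
  have hKQ : ∀ i (j : Fin m), ((K i j : ℤ) : ℚ) = ((NQ ^ (j : ℕ)) *ᵥ fun i => (q i : ℚ)) i := by
    intro i j
    have h1 := RingHom.map_mulVec (Int.castRingHom ℚ) (N ^ (j : ℕ)) q i
    rw [Matrix.map_pow] at h1
    exact h1
  have hdet : 1 ≤ |(Kᵀ * K).det| := by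
    refine one_le_abs_det_gram K fun v hv => ?_
    let g : ℚ[X] := ∑ i : Fin m, C (v i) * X ^ (i : ℕ)
    have hgc : ∀ i : Fin m, g.coeff i = v i := by
      intro i
      simp only [g, finsetSum_coeff, coeff_C_mul_X_pow]
      rw [Finset.sum_eq_single i]
      · simp
      · intro j _ hj; rw [if_neg]; intro h; exact hj (Fin.ext h.symm)
      · simp
    have hgd : g.degree < m := degree_sum_fin_lt v
    have hgn : g.natDegree < m := by
      rcases eq_or_ne g 0 with h | h
      · rw [h, natDegree_zero]; exact hfd
      · exact (natDegree_lt_iff_degree_lt h).2 hgd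
    have hg0 : g = 0 := by
      refine hfmin g (by rwa [degree_eq_natDegree hfm.ne_zero]) ?_
      ext l
      rw [aeval_mulVec_eq_sum NQ hgn]
      rw [← congrFun hv l]
      simp only [Matrix.mulVec, dotProduct, Matrix.map_apply, hgc]
      refine Finset.sum_congr rfl fun i _ => ?_
      rw [hKQ, mul_comm]; rfl
    ext i
    rw [← hgc i, hg0, coeff_zero, Pi.zero_apply]
  -- complex factorisation
  have hzr : (f.map (algebraMap ℚ ℂ)).IsRoot z := by
    rw [IsRoot.def, eval_map_algebraMap, hzf]
  obtain ⟨r, hr⟩ := dvd_iff_isRoot.2 hzr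
  have hrm : r.Monic := (monic_X_sub_C z).of_mul_monic_left (by rw [← hr]; exact hfm.map _)
  have hrd : r.natDegree + 1 = m := by
    have h1 := congrArg natDegree hr
    rw [hfm.natDegree_map, (monic_X_sub_C z).natDegree_mul hrm, natDegree_X_sub_C] at h1
    omega
  have hrz : ∀ w ∈ r.roots, ‖w‖ ≤ max R 0 := by
    intro w hw
    refine hR w (hPz w ?_)
    rw [← eval_map_algebraMap, hr, eval_mul, (mem_roots hrm.ne_zero).1 hw, mul_zero]
  have hrprod : r = (r.roots.map fun w => X - C w).prod :=
    (IsAlgClosed.splits r).eq_prod_roots_of_monic hrm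
  have hrcard : r.roots.card = r.natDegree := (IsAlgClosed.splits r).natDegree_eq_card_roots.symm
  have hrbound : ∀ y : ι → ℂ, ‖aeval A r *ᵥ y‖ ≤ L ^ d * ‖y‖ := by
    intro y
    have h1 := norm_aeval_prod_mulVec_le hM0 hM r.roots hrz hR0 y
    rw [← hrprod, hrcard] at h1
    refine h1.trans ?_
    gcongr ?_ * _
    calc (M + max R 0) ^ r.natDegree ≤ L ^ r.natDegree := by gcongr; linarith
      _ ≤ L ^ d := pow_le_pow_right₀ hL1 (by omega)
  set e := aeval A r *ᵥ x with he
  have hez : aeval A (X - C z) *ᵥ e = 0 := by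
    rw [he, Matrix.mulVec_mulVec, ← map_mul, ← hr]
    ext l
    have hfn : (f.map (algebraMap ℚ ℂ)).natDegree < m + 1 := by
      rw [hfm.natDegree_map]; exact Nat.lt_succ_self _
    rw [aeval_mulVec_eq_sum A hfn]
    have h2 := congrFun hfq l
    rw [aeval_mulVec_eq_sum NQ (Nat.lt_succ_self f.natDegree)] at h2
    have h3 := congrArg (algebraMap ℚ ℂ) h2
    rw [map_sum, Pi.zero_apply, map_zero] at h3
    rw [Pi.zero_apply, ← h3]
    refine Finset.sum_congr rfl fun i _ => ?_
    rw [map_mul, coeff_map]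
    congr 1
    have h4 := RingHom.map_mulVec (algebraMap ℚ ℂ) (NQ ^ (i : ℕ)) (fun i => (q i : ℚ)) l
    rw [h4, Matrix.map_pow]
    congr 2
  have hep : ‖e‖ ≤ δ * (L ^ d * ‖aeval A p *ᵥ x‖) := by
    have h1 := aeval_mulVec_of_eigenvector hez p
    have h2 : aeval A p *ᵥ e = aeval A r *ᵥ (aeval A p *ᵥ x) := by
      rw [he, Matrix.mulVec_mulVec, Matrix.mulVec_mulVec, ← map_mul, ← map_mul, mul_comm]
    have h3 : ‖p.eval z‖ * ‖e‖ ≤ L ^ d * ‖aeval A p *ᵥ x‖ := by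
      rw [← norm_smul, ← h1, h2]; exact hrbound _
    have h4 : 0 < ‖p.eval z‖ := norm_pos_iff.2 (hp z (hPz z hzf) hz1)
    calc ‖e‖ = ‖p.eval z‖⁻¹ * (‖p.eval z‖ * ‖e‖) := by field_simp
      _ ≤ δ * (L ^ d * ‖aeval A p *ᵥ x‖) := by gcongr; exact hδ' z (hPz z hzf)
  -- replace the last column of the Gram matrix
  let G : Matrix (Fin m) (Fin m) ℂ := (Kᵀ * K).map (fun a => (a : ℂ))
  have hG : ∀ i j, G i j = ∑ l, (K l i : ℂ) * (K l j : ℂ) := by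
    intro i j; simp [G, Matrix.mul_apply]
  have hGdet : 1 ≤ ‖G.det‖ := by
    have : G.det = (((Kᵀ * K).det : ℤ) : ℂ) := ((Int.castRingHom ℂ).map_det (Kᵀ * K)).symm
    rw [this, Complex.norm_intCast]
    exact_mod_cast hdet
  let j₀ : Fin m := ⟨m - 1, by omega⟩
  have hGdet' : (G.updateCol j₀ (fun k => ∑ i : Fin m, r.coeff i • G k i)).det = G.det := by
    rw [Matrix.det_updateCol_sum]
    have : r.coeff ((j₀ : Fin m) : ℕ) = 1 := by
      have h1 : ((j₀ : Fin m) : ℕ) = r.natDegree := by simp only [j₀]; omega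
      rw [h1]; exact hrm
    rw [this, one_smul]
  have hcol : ∀ k, ∑ i : Fin m, r.coeff i • G k i = ∑ l, (K l k : ℂ) * e l := by
    intro k
    have h1 : ∀ l, e l = ∑ i : Fin m, r.coeff i * (K l i : ℂ) := by
      intro l
      rw [he, aeval_mulVec_eq_sum A (by omega : r.natDegree < m)]
      simp_rw [hKC]
    simp_rw [h1, hG, Finset.mul_sum, smul_eq_mul, Finset.mul_sum]
    rw [Finset.sum_comm]
    refine Finset.sum_congr rfl fun l _ => Finset.sum_congr rfl fun i _ => by ring
  have hKb : ∀ l k, ‖(K l k : ℂ)‖ ≤ L ^ d * ‖x‖ := by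
    intro l k
    rw [hKC]
    refine (norm_le_pi_norm _ l).trans ?_
    have h1 : ∀ j : ℕ, ‖(A ^ j) *ᵥ x‖ ≤ L ^ j * ‖x‖ := by
      intro j
      induction j with
      | zero => simp
      | succ j ih =>
        rw [pow_succ', ← Matrix.mulVec_mulVec, pow_succ', mul_assoc]
        exact (hM _).trans (by gcongr; linarith)
    refine (h1 k).trans ?_
    gcongr
    omega
  have hsum : ∀ (u v : ι → ℂ) (a b : ℝ), (∀ l, ‖u l‖ ≤ a) → (∀ l, ‖v l‖ ≤ b) → 0 ≤ a →
      ‖∑ l, u l * v l‖ ≤ d * (a * b) := by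
    intro u v a b hu hv ha
    refine (norm_sum_le _ _).trans ?_
    refine (Finset.sum_le_sum fun l _ => (norm_mul_le _ _).trans
      (mul_le_mul (hu l) (hv l) (norm_nonneg _) ha)).trans_eq ?_
    rw [Finset.sum_const, nsmul_eq_mul, Finset.card_univ]
  have hb := norm_det_le_of_column (G.updateCol j₀ (fun k => ∑ i : Fin m, r.coeff i • G k i)) j₀
    (x := d * (L ^ d * ‖x‖ * (L ^ d * ‖x‖))) (y := d * (L ^ d * ‖x‖ * ‖e‖))
    (fun i j hj => by
      rw [Matrix.updateCol_ne hj, hG]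
      exact hsum _ _ _ _ (fun l => hKb l i) (fun l => hKb l j) (by positivity))
    (fun i => by
      rw [Matrix.updateCol_self, hcol]
      exact hsum _ _ _ _ (fun l => hKb l i) (fun l => norm_le_pi_norm e l) (by positivity))
  rw [hGdet', Fintype.card_fin] at hb
  have hd1' : (1 : ℝ) ≤ d := by exact_mod_cast hd1
  have hLd : 1 ≤ L ^ d := one_le_pow₀ hL1
  have hH : 1 ≤ d * (L ^ d * L ^ d) := one_le_mul_of_one_le_of_one_le hd1'
    (one_le_mul_of_one_le_of_one_le hLd hLd)
  calc (1 : ℝ) ≤ _ := hGdet.trans hb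
    _ = m.factorial * ((d * (L ^ d * L ^ d)) ^ (m - 1) * (d * L ^ d * ‖e‖)) *
        ‖x‖ ^ (2 * (m - 1) + 1) := by
      rw [show d * (L ^ d * ‖x‖ * (L ^ d * ‖x‖)) = (d * (L ^ d * L ^ d)) * ‖x‖ ^ 2 by ring,
        mul_pow, ← pow_mul]
      ring
    _ ≤ d.factorial * ((d * (L ^ d * L ^ d)) ^ d *
        (d * L ^ d * (δ * (L ^ d * ‖aeval A p *ᵥ x‖)))) * ‖x‖ ^ (2 * d) := by
      gcongr
      · omega
      · omega
    _ = _ := by ring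

lemma exists_lt_one_forall_norm_inv_le (s : Multiset ℂ) (hs : ∀ z ∈ s, 1 < ‖z‖) :
    ∃ ρ : ℝ, 0 < ρ ∧ ρ < 1 ∧ ∀ z ∈ s, ‖z⁻¹‖ ≤ ρ := by
  induction s using Multiset.induction with
  | empty => exact ⟨1 / 2, by norm_num, by norm_num, by simp⟩
  | cons a s ih =>
    obtain ⟨ρ, h0, h1, h⟩ := ih fun z hz => hs z (Multiset.mem_cons_of_mem hz)
    have ha := hs a (Multiset.mem_cons_self a s)
    refine ⟨max ρ ‖a⁻¹‖, lt_max_of_lt_left h0, max_lt h1 ?_, fun z hz => ?_⟩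
    · rw [norm_inv]; exact inv_lt_one_of_one_lt₀ ha
    · rcases Multiset.mem_cons.1 hz with rfl | hz
      · exact le_max_right _ _
      · exact (h z hz).trans (le_max_left _ _)

lemma exists_pow_mul_pow_le {θ : ℝ} (h0 : 0 < θ) (h1 : θ < 1) (D : ℕ) :
    ∃ K : ℝ, 0 ≤ K ∧ ∀ k : ℕ, θ ^ k * ((k : ℝ) + 1) ^ D ≤ K := by
  have h := (tendsto_pow_const_mul_const_pow_of_abs_lt_one D (abs_lt.2 ⟨by linarith, h1⟩)).comp
    (Filter.tendsto_add_atTop_nat 1)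
  obtain ⟨K, hK⟩ := h.bddAbove_range
  have hK' : ∀ k : ℕ, ((k : ℝ) + 1) ^ D * θ ^ (k + 1) ≤ K := fun k => by
    have := hK ⟨k, rfl⟩; simpa using this
  refine ⟨K / θ, div_nonneg ((by positivity : (0 : ℝ) ≤ _).trans (hK' 0)) h0.le, fun k => ?_⟩
  rw [le_div_iff₀ h0]
  refine le_trans (le_of_eq ?_) (hK' k)
  ring

/-- Unstable and centre-stable data of an integer matrix `N` with inverse `N'` and without
eigenvalues that are roots of unity: `Bu` detects the unstable part of a vector, `Bs` the
centre-stable part, and for nonzero integer vectors one of them is exponentially large. -/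
lemma exists_unstable_centreStable {ι : Type*} [Fintype ι] [DecidableEq ι] (N N' : Matrix ι ι ℤ)
    (hN : N' * N = 1)
    (hroot : ∀ z : ℂ, aeval z N.charpoly = 0 → ∀ n : ℕ, n ≠ 0 → z ^ n ≠ 1) :
    ∃ (Bu Bs : Matrix ι ι ℂ) (K : ℝ) (D : ℕ) (c σ : ℝ), 0 ≤ K ∧ 0 < c ∧ 1 < σ ∧
      (∀ (m : ℕ) i j, ‖(Bu * N'.map (fun a => (a : ℂ)) ^ m) i j‖ ≤ K) ∧
      (∀ (k : ℕ) i j, ‖(Bs * N.map (fun a => (a : ℂ)) ^ k) i j‖ ≤ K * ((k : ℝ) + 1) ^ D) ∧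
      ∀ (n : ℕ) (q : ι → ℤ), q ≠ 0 →
        c * σ ^ n ≤ ‖Bu *ᵥ ((N.map (fun a => (a : ℂ)) ^ n) *ᵥ fun i => (q i : ℂ))‖ ∨
        c * σ ^ n ≤ ‖Bs *ᵥ fun i => (q i : ℂ)‖ := by
  set A : Matrix ι ι ℂ := N.map (fun a => (a : ℂ)) with hA
  set A' : Matrix ι ι ℂ := N'.map (fun a => (a : ℂ)) with hA'
  set d := Fintype.card ι
  have hA'A : A' * A = 1 := by
    have h1 := congrArg (Int.castRingHom ℂ).mapMatrix hN
    rw [map_mul, map_one] at h1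
    exact h1
  have hAA' : A * A' = 1 := mul_eq_one_comm.mp hA'A
  have hch : A.charpoly = N.charpoly.map (Int.castRingHom ℂ) :=
    Matrix.charpoly_map N (Int.castRingHom ℂ)
  have hroots : ∀ z : ℂ, z ∈ A.charpoly.roots ↔ aeval z N.charpoly = 0 := by
    intro z
    rw [mem_roots (charpoly_monic A).ne_zero, IsRoot.def, hch, ← algebraMap_int_eq,
      eval_map_algebraMap]
  have hz0 : ∀ z : ℂ, aeval z N.charpoly = 0 → z ≠ 0 := by
    rintro z hz rfl
    have h1 : N.charpoly.coeff 0 = 0 := by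
      rw [← coeff_zero_eq_aeval_zero'] at hz
      simpa using hz
    have h2 := Matrix.det_eq_sign_charpoly_coeff N
    rw [h1, mul_zero] at h2
    have h3 := congrArg Matrix.det hN
    rw [Matrix.det_mul, h2, mul_zero, Matrix.det_one] at h3
    exact zero_ne_one h3
  set su := A.charpoly.roots.filter (fun z => 1 < ‖z‖) with hsu
  set ss := A.charpoly.roots.filter (fun z => ¬ 1 < ‖z‖) with hss
  set Pu : ℂ[X] := (su.map fun z => X - C z).prod with hPu
  set Ps : ℂ[X] := (ss.map fun z => X - C z).prod with hPs
  have hprod : Pu * Ps = A.charpoly := by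
    rw [hPu, hPs, ← Multiset.prod_add, ← Multiset.map_add, hsu, hss, Multiset.filter_add_not]
    exact ((IsAlgClosed.splits A.charpoly).eq_prod_roots_of_monic (charpoly_monic A)).symm
  have heval : ∀ (t : Multiset ℂ) (z : ℂ), eval z (t.map fun w => X - C w).prod = 0 → z ∈ t := by
    intro t z h
    rw [eval_multiset_prod, Multiset.prod_eq_zero_iff] at h
    simp only [Multiset.map_map, Multiset.mem_map, Function.comp_apply, eval_sub, eval_X,
      eval_C] at h
    obtain ⟨w, hw, hzw⟩ := h
    rwa [sub_eq_zero.1 hzw]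
  have hcop : IsCoprime Pu Ps := by
    rw [Polynomial.isCoprime_iff_aeval_ne_zero_of_isAlgClosed ℂ ℂ]
    intro a
    by_contra! hcon
    simp only [coe_aeval_eq_eval] at hcon
    exact (Multiset.mem_filter.1 (heval _ _ hcon.2)).2 (Multiset.mem_filter.1 (heval _ _ hcon.1)).2
  obtain ⟨ρ, hρ0, hρ1, hρ⟩ := exists_lt_one_forall_norm_inv_le su
    fun z hz => (Multiset.mem_filter.1 hz).2
  obtain ⟨K1, hK10, hK1⟩ := norm_pow_mulVec_le A' hρ0 (su.map fun z => z⁻¹) (by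
    intro z hz
    obtain ⟨w, hw, rfl⟩ := Multiset.mem_map.1 hz
    exact hρ w hw)
  obtain ⟨K2, hK20, hK2⟩ := norm_pow_mulVec_le A one_pos ss
    fun z hz => not_lt.1 (Multiset.mem_filter.1 hz).2
  obtain ⟨Y, hY⟩ := aeval_prod_inv hA'A su fun z hz =>
    hz0 z ((hroots z).1 (Multiset.mem_filter.1 hz).1)
  set θ := Real.sqrt ρ with hθ
  have hθ0 : 0 < θ := Real.sqrt_pos.2 hρ0
  have hθ1 : θ < 1 := by rw [hθ, Real.sqrt_lt' one_pos]; simpa using hρ1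
  have hθρ : θ * θ = ρ := Real.mul_self_sqrt hρ0.le
  obtain ⟨K3, hK30, hK3⟩ := exists_pow_mul_pow_le hθ0 hθ1 (su.map fun z => z⁻¹).card
  have hcontr : ∀ x : ι → ℂ, aeval A Pu *ᵥ x = 0 → ∀ k : ℕ,
      ‖(A' ^ k) *ᵥ x‖ ≤ K1 * K3 * θ ^ k * ‖x‖ := by
    intro x hx k
    have h1 := hK1 x (by rw [hY, ← Matrix.mulVec_mulVec, hx, Matrix.mulVec_zero]) k
    refine h1.trans ?_
    calc _ = K1 * θ ^ k * (θ ^ k * ((k : ℝ) + 1) ^ (su.map fun z => z⁻¹).card) * ‖x‖ := by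
          rw [← hθρ, mul_pow]; ring
      _ ≤ K1 * θ ^ k * K3 * ‖x‖ := by gcongr; exact hK3 k
      _ = _ := by ring
  have hPuPs : ∀ x : ι → ℂ, aeval A Pu *ᵥ (aeval A Ps *ᵥ x) = 0 := fun x => by
    rw [Matrix.mulVec_mulVec, ← map_mul, hprod, Matrix.aeval_self_charpoly, Matrix.zero_mulVec]
  have hPsPu : ∀ x : ι → ℂ, aeval A Ps *ᵥ (aeval A Pu *ᵥ x) = 0 := fun x => by
    rw [Matrix.mulVec_mulVec, ← map_mul, mul_comm, hprod, Matrix.aeval_self_charpoly,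
      Matrix.zero_mulVec]
  have hentry : ∀ (B : Matrix ι ι ℂ) i j, ‖B i j‖ ≤ ‖B *ᵥ Pi.single j 1‖ := by
    intro B i j
    refine le_trans (le_of_eq ?_) (norm_le_pi_norm _ i)
    simp
  have hsingle : ∀ j : ι, ‖(Pi.single j 1 : ι → ℂ)‖ ≤ 1 := fun j => by
    rw [Pi.norm_single]; simp
  have hcommA : ∀ p : ℂ[X], Commute (aeval A p) A := fun p => by
    have h1 := Commute.all p (X : ℂ[X])
    have h2 := h1.map (aeval A)
    rwa [aeval_X] at h2
  have hcommA' : ∀ p : ℂ[X], Commute (aeval A p) A' := fun p => by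
    have h1 := (hcommA p).eq
    rw [commute_iff_eq]
    calc aeval A p * A' = A' * (A * aeval A p) * A' := by
          rw [← mul_assoc, hA'A, one_mul]
      _ = A' * aeval A p * (A * A') := by rw [← h1]; simp only [mul_assoc]
      _ = _ := by rw [hAA', mul_one]
  obtain ⟨Mu, hMu0, hMu⟩ := exists_mulVec_bound (aeval A Ps)
  obtain ⟨Ms, hMs0, hMs⟩ := exists_mulVec_bound (aeval A Pu)
  obtain ⟨a, b, hab⟩ := hcop
  obtain ⟨Ma, hMa0, hMa⟩ := exists_mulVec_bound (aeval A a)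
  obtain ⟨Mb, hMb0, hMb⟩ := exists_mulVec_bound (aeval A b)
  obtain ⟨K4, hK40, hK4⟩ := exists_diophantine_bound N (fun z hz => ⟨hz0 z hz, hroot z hz⟩) Ps
    (fun z _ hz1 hz => (Multiset.mem_filter.1 (heval _ _ hz)).2 hz1)
  set K0 := K1 * K3
  have hK00 : 0 ≤ K0 := by positivity
  set K5 := K4 * (Mb * K0 + Ma) ^ (2 * d) * K0 with hK5
  have hK50 : 0 ≤ K5 := by positivity
  set σ := (θ⁻¹) ^ (((2 * d + 1 : ℕ) : ℝ)⁻¹) with hσ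
  have hσpow : σ ^ (2 * d + 1) = θ⁻¹ := Real.rpow_inv_natCast_pow (by positivity) (by omega)
  have hσ1 : 1 < σ := Real.one_lt_rpow (one_lt_inv₀ hθ0 |>.2 hθ1) (by positivity)
  refine ⟨aeval A Ps, aeval A Pu, K0 * Mu + K2 * Ms, ss.card, 1 / (K5 + 1), σ, by positivity,
    by positivity, hσ1, fun m i j => ?_, fun k i j => ?_, fun n q hq => ?_⟩
  · refine (hentry _ i j).trans ?_
    rw [((hcommA' Ps).pow_right m).eq, ← Matrix.mulVec_mulVec]
    refine (hcontr _ (hPuPs _) m).trans ?_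
    calc K0 * θ ^ m * ‖aeval A Ps *ᵥ Pi.single j 1‖ ≤ K0 * 1 * (Mu * 1) := by
          gcongr
          · exact pow_le_one₀ hθ0.le hθ1.le
          · exact (hMu _).trans (by gcongr; exact hsingle j)
      _ ≤ _ := by have : 0 ≤ K2 * Ms := by positivity
                  linarith
  · refine (hentry _ i j).trans ?_
    rw [((hcommA Pu).pow_right k).eq, ← Matrix.mulVec_mulVec]
    refine (hK2 _ (hPsPu _) k).trans ?_
    rw [one_pow, mul_one]
    calc K2 * ((k : ℝ) + 1) ^ ss.card * ‖aeval A Pu *ᵥ Pi.single j 1‖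
        ≤ K2 * ((k : ℝ) + 1) ^ ss.card * (Ms * 1) := by
          gcongr
          exact (hMs _).trans (by gcongr; exact hsingle j)
      _ = K2 * Ms * ((k : ℝ) + 1) ^ ss.card := by ring
      _ ≤ _ := by gcongr; have : 0 ≤ K0 * Mu := by positivity
                  linarith
  · by_contra! hcon
    obtain ⟨h1, h2⟩ := hcon
    set x : ι → ℂ := fun i => (q i : ℂ)
    set R := 1 / (K5 + 1) * σ ^ n with hR
    have hR0 : 0 ≤ R := by positivity
    set u := aeval A Ps *ᵥ x with hu
    set v := aeval A Pu *ᵥ x with hv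
    have hAn : aeval A Ps *ᵥ ((A ^ n) *ᵥ x) = (A ^ n) *ᵥ u := by
      rw [hu, Matrix.mulVec_mulVec, Matrix.mulVec_mulVec, ((hcommA Ps).pow_right n).eq]
    rw [hAn] at h1
    have hun : (A' ^ n) *ᵥ ((A ^ n) *ᵥ u) = u := by
      have : Commute A' A := by rw [commute_iff_eq, hA'A, hAA']
      rw [Matrix.mulVec_mulVec, ← this.mul_pow, hA'A, one_pow, Matrix.one_mulVec]
    have hu1 : ‖u‖ ≤ K0 * θ ^ n * R := by
      have h3 := hcontr ((A ^ n) *ᵥ u) (by rw [← hAn]; exact hPuPs _) n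
      rw [hun] at h3
      exact h3.trans (by gcongr)
    have hu2 : ‖u‖ ≤ K0 * R := hu1.trans (by
      gcongr; exact mul_le_of_le_one_right hK00 (pow_le_one₀ hθ0.le hθ1.le))
    have hx : ‖x‖ ≤ (Mb * K0 + Ma) * R := by
      have h3 : x = aeval A a *ᵥ v + aeval A b *ᵥ u := by
        rw [hu, hv, Matrix.mulVec_mulVec, Matrix.mulVec_mulVec, ← map_mul, ← map_mul,
          ← Matrix.add_mulVec, ← map_add, hab, map_one, Matrix.one_mulVec]
      calc ‖x‖ ≤ ‖aeval A a *ᵥ v‖ + ‖aeval A b *ᵥ u‖ := by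
            conv_lhs => rw [h3]
            exact norm_add_le _ _
        _ ≤ Ma * R + Mb * (K0 * R) := by
            gcongr
            · exact (hMa v).trans (by gcongr)
            · exact (hMb u).trans (by gcongr)
        _ = _ := by ring
    have h5 : 1 ≤ K5 * (R ^ (2 * d + 1) * θ ^ n) := by
      refine (hK4 q hq).trans ?_
      calc K4 * ‖x‖ ^ (2 * d) * ‖u‖ ≤ K4 * ((Mb * K0 + Ma) * R) ^ (2 * d) * (K0 * θ ^ n * R) := by
            gcongr
        _ = _ := by rw [hK5, mul_pow]; ring
    have h6 : R ^ (2 * d + 1) * θ ^ n = (1 / (K5 + 1)) ^ (2 * d + 1) := by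
      rw [hR, mul_pow, ← pow_mul, mul_comm n, pow_mul, hσpow, mul_assoc, ← mul_pow,
        inv_mul_cancel₀ hθ0.ne', one_pow, mul_one]
    have h7 : (1 / (K5 + 1)) ^ (2 * d + 1) ≤ 1 / (K5 + 1) :=
      pow_le_of_le_one (by positivity) (by rw [div_le_one (by positivity)]; linarith) (by omega)
    rw [h6] at h5
    have h8 : K5 * (1 / (K5 + 1)) < 1 := by
      rw [mul_one_div, div_lt_one (by positivity)]; linarith
    have h9 := mul_le_mul_of_nonneg_left h7 hK50
    linarith

end

section

open Matrix ComplexConjugate UnitAddTorus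

/-! ### Toral endomorphisms -/

lemma torusAut_one {d : ℕ} (x : Torus d) : torusAut 1 x = x := by
  funext i
  simp [torusAut, Matrix.one_apply]

lemma torusAut_mul {d : ℕ} (S S' : Matrix (Fin d) (Fin d) ℤ) (x : Torus d) :
    torusAut (S * S') x = torusAut S (torusAut S' x) := by
  funext i
  simp only [torusAut, Matrix.mul_apply, Finset.sum_smul, Finset.smul_sum, mul_smul]
  exact Finset.sum_comm

lemma torusAut_iterate {d : ℕ} (S : Matrix (Fin d) (Fin d) ℤ) (n : ℕ) :
    (torusAut S)^[n] = torusAut (S ^ n) := by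
  induction n with
  | zero => funext x; simp [torusAut_one]
  | succ n ih => funext x; rw [Function.iterate_succ_apply', ih, pow_succ', torusAut_mul]

lemma torusAut_add {d : ℕ} (S : Matrix (Fin d) (Fin d) ℤ) (x y : Torus d) :
    torusAut S (x + y) = torusAut S x + torusAut S y := by
  funext i
  simp [torusAut, Finset.sum_add_distrib]

lemma continuous_torusAut {d : ℕ} (S : Matrix (Fin d) (Fin d) ℤ) : Continuous (torusAut S) := by
  unfold torusAut
  fun_prop

lemma measurePreserving_torusAut {d : ℕ} {S S' : Matrix (Fin d) (Fin d) ℤ} (h : S * S' = 1) :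
    MeasurePreserving (torusAut S) (volume : Measure (Torus d)) volume := by
  have : (volume : Measure (Torus d)).IsAddHaarMeasure :=
    inferInstanceAs
      (Measure.pi fun _ : Fin d => (volume : Measure (AddCircle (1 : ℝ)))).IsAddHaarMeasure
  refine AddMonoidHom.measurePreserving (f := AddMonoidHom.mk' (torusAut S) (torusAut_add S))
    (continuous_torusAut S) (fun x => ⟨torusAut S' x, ?_⟩) rfl
  change torusAut S (torusAut S' x) = x
  rw [← torusAut_mul, h, torusAut_one]

/-- The projection `ℝ^d → ℝ^d/ℤ^d`. -/
def torusProj {d : ℕ} (v : Fin d → ℝ) : Torus d := fun i => (v i : AddCircle (1 : ℝ))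

lemma torusAut_torusProj {d : ℕ} (S : Matrix (Fin d) (Fin d) ℤ) (v : Fin d → ℝ) :
    torusAut S (torusProj v) = torusProj (S.map (fun a => (a : ℝ)) *ᵥ v) := by
  funext i
  simp only [torusAut, torusProj, Matrix.mulVec, dotProduct, Matrix.map_apply]
  have := (map_sum (QuotientAddGroup.mk' (AddSubgroup.zmultiples (1 : ℝ)))
    (fun j => (S i j : ℝ) * v j) Finset.univ).symm
  refine Eq.trans ?_ this
  refine Finset.sum_congr rfl fun j _ => ?_
  rw [← zsmul_eq_mul]
  exact (map_zsmul (QuotientAddGroup.mk' (AddSubgroup.zmultiples (1 : ℝ))) (S i j) (v j)).symm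

lemma torusDist_add_left_le {d : ℕ} (x : Torus d) (v : Fin d → ℝ) {B : ℝ} (hB : 0 ≤ B)
    (hv : ∀ i, |v i| ≤ B) : torusDist (x + torusProj v) x ≤ Real.sqrt d * B := by
  have h : ∑ i, ‖(x + torusProj v) i - x i‖ ^ 2 ≤ d * B ^ 2 := by
    calc _ ≤ ∑ _i : Fin d, B ^ 2 := by
          refine Finset.sum_le_sum fun i _ => ?_
          refine pow_le_pow_left₀ (norm_nonneg _) ?_ 2
          simp only [Pi.add_apply, add_sub_cancel_left, torusProj]
          exact (QuotientAddGroup.norm_mk_le_norm (S := AddSubgroup.zmultiples (1 : ℝ)) (m := v i)).trans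
            (hv i)
      _ = _ := by simp
  calc torusDist (x + torusProj v) x ≤ Real.sqrt (d * B ^ 2) := Real.sqrt_le_sqrt h
    _ = Real.sqrt d * B := by rw [Real.sqrt_mul (Nat.cast_nonneg d), Real.sqrt_sq hB]

lemma torusDist_nonneg {d : ℕ} (x y : Torus d) : 0 ≤ torusDist x y := Real.sqrt_nonneg _

/-! ### Fourier coefficients -/

/-- Fourier coefficients with respect to `volume`. -/
def torusCoeff {d : ℕ} (f : Torus d → ℂ) (q : Fin d → ℤ) : ℂ :=
  ∫ x, mFourier (-q) x * f x

lemma volume_torus_eq_pi_haar (d : ℕ) :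
    (volume : Measure (Torus d)) = Measure.pi fun _ => AddCircle.haarAddCircle := by
  rw [volume_pi]
  congr 1
  funext i
  rw [AddCircle.volume_eq_smul_haarAddCircle]
  simp

instance {d : ℕ} : IsProbabilityMeasure (volume : Measure (Torus d)) := by
  rw [volume_torus_eq_pi_haar]
  infer_instance

lemma hasSum_conj_torusCoeff_mul {d : ℕ} {f g : Torus d → ℂ} (hf : MemLp f 2 volume)
    (hg : MemLp g 2 volume) :
    HasSum (fun q => conj (torusCoeff f q) * torusCoeff g q) (∫ x, conj (f x) * g x) := by
  unfold torusCoeff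
  rw [volume_torus_eq_pi_haar] at hf hg ⊢
  have h := hasSum_prod_mFourierCoeff (d := Fin d) hf.toLp hg.toLp
  convert! h using 1
  · funext q
    congr 1
    · congr 1
      refine integral_congr_ae ?_
      filter_upwards [hf.coeFn_toLp] with x hx
      rw [hx, smul_eq_mul]
    · refine integral_congr_ae ?_
      filter_upwards [hg.coeFn_toLp] with x hx
      rw [hx, smul_eq_mul]
  · refine integral_congr_ae ?_
    filter_upwards [hf.coeFn_toLp, hg.coeFn_toLp] with x hx hy
    rw [hx, hy]

lemma hasSum_sq_torusCoeff {d : ℕ} {f : Torus d → ℂ} (hf : MemLp f 2 volume) :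
    HasSum (fun q => ‖torusCoeff f q‖ ^ 2) (∫ x, ‖f x‖ ^ 2) := by
  unfold torusCoeff
  rw [volume_torus_eq_pi_haar] at hf ⊢
  have h := hasSum_sq_mFourierCoeff (d := Fin d) hf.toLp
  convert! h using 1
  · funext q
    congr 2
    refine integral_congr_ae ?_
    filter_upwards [hf.coeFn_toLp] with x hx
    rw [hx, smul_eq_mul]
  · refine integral_congr_ae ?_
    filter_upwards [hf.coeFn_toLp] with x hx
    rw [hx]

lemma mFourier_apply_add {d : ℕ} (q : Fin d → ℤ) (x y : Torus d) :
    mFourier q (x + y) = mFourier q x * mFourier q y := by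
  simp [mFourier, AddCircle.toCircle_add, Finset.prod_mul_distrib]

lemma norm_mFourier_apply {d : ℕ} (q : Fin d → ℤ) (x : Torus d) : ‖mFourier q x‖ = 1 := by
  simp only [mFourier, ContinuousMap.coe_mk, fourier_apply, norm_prod, Circle.norm_coe,
    Finset.prod_const_one]

lemma mFourier_torusProj {d : ℕ} (q : Fin d → ℤ) (v : Fin d → ℝ) :
    mFourier q (torusProj v) = Complex.exp (2 * Real.pi * (∑ i, q i * v i : ℝ) * Complex.I) := by
  simp only [mFourier, torusProj, ContinuousMap.coe_mk, fourier_coe_apply]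
  rw [← Complex.exp_sum]
  congr 1
  push_cast
  rw [Finset.mul_sum, Finset.sum_mul]
  refine Finset.sum_congr rfl fun i _ => ?_
  ring

lemma mFourier_torusAut {d : ℕ} (S : Matrix (Fin d) (Fin d) ℤ) (q : Fin d → ℤ) (x : Torus d) :
    mFourier q (torusAut S x) = mFourier (Sᵀ *ᵥ q) x := by
  have hsum : ∀ (s : Finset (Fin d)) (f : Fin d → AddCircle (1 : ℝ)),
      (AddCircle.toCircle (∑ j ∈ s, f j) : ℂ) = ∏ j ∈ s, (AddCircle.toCircle (f j) : ℂ) := by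
    intro s f
    classical
    induction s using Finset.induction_on with
    | empty => simp
    | insert a s ha ih => rw [Finset.sum_insert ha, Finset.prod_insert ha,
        AddCircle.toCircle_add, Circle.coe_mul, ih]
  simp only [mFourier, ContinuousMap.coe_mk, fourier_apply, torusAut, Matrix.mulVec, dotProduct,
    Matrix.transpose_apply, Finset.smul_sum, Finset.sum_smul, hsum]
  rw [Finset.prod_comm]
  refine Finset.prod_congr rfl fun j _ => Finset.prod_congr rfl fun i _ => ?_
  rw [smul_smul, mul_comm]

lemma torusCoeff_comp_add {d : ℕ} (f : Torus d → ℂ) (y : Torus d) (q : Fin d → ℤ) :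
    torusCoeff (fun x => f (x + y)) q = mFourier q y * torusCoeff f q := by
  unfold torusCoeff
  rw [← integral_add_right_eq_self (fun x => mFourier (-q) x * f x) y, ← integral_const_mul]
  congr 1
  funext x
  rw [mFourier_apply_add, mFourier_neg (n := q) (x := y)]
  have h : mFourier q y * conj (mFourier q y) = 1 := by
    rw [Complex.mul_conj, Complex.normSq_eq_norm_sq, norm_mFourier_apply]; simp
  linear_combination (-(mFourier (-q) x * f (x + y))) * h

lemma torusCoeff_comp_torusAut {d : ℕ} {S S' : Matrix (Fin d) (Fin d) ℤ} (h : S' * S = 1)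
    (f : Torus d → ℂ) (q : Fin d → ℤ) :
    torusCoeff (fun x => f (torusAut S x)) (Sᵀ *ᵥ q) = torusCoeff f q := by
  have h' : S * S' = 1 := mul_eq_one_comm.1 h
  unfold torusCoeff
  let e : Torus d ≃ᵐ Torus d :=
    { toFun := torusAut S
      invFun := torusAut S'
      left_inv := fun x => by rw [← torusAut_mul, h, torusAut_one]
      right_inv := fun x => by rw [← torusAut_mul, h', torusAut_one]
      measurable_toFun := (continuous_torusAut S).measurable
      measurable_invFun := (continuous_torusAut S').measurable }
  have he : MeasurePreserving e volume volume := measurePreserving_torusAut h'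
  rw [← he.integral_comp' (fun x => mFourier (-q) x * f x)]
  congr 1
  funext x
  change _ = mFourier (-q) (torusAut S x) * f (torusAut S x)
  rw [mFourier_torusAut, mulVec_neg]

lemma two_le_norm_exp_sub_one_sq {θ : ℝ} (h1 : 1 / 4 ≤ |θ|) (h2 : |θ| ≤ 1 / 2) :
    2 ≤ ‖Complex.exp (2 * Real.pi * (θ : ℂ) * Complex.I) - 1‖ ^ 2 := by
  have hc : Real.cos (2 * Real.pi * θ) ≤ 0 := by
    rw [← Real.cos_abs, abs_mul, abs_of_pos Real.two_pi_pos]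
    have := Real.pi_pos
    exact Real.cos_nonpos_of_pi_div_two_le_of_le (by nlinarith) (by nlinarith)
  have hs := Real.sin_sq_add_cos_sq (2 * Real.pi * θ)
  have he : Complex.exp (2 * Real.pi * (θ : ℂ) * Complex.I) =
      Complex.exp ((2 * Real.pi * θ : ℝ) * Complex.I) := by push_cast; rfl
  rw [he, ← Complex.normSq_eq_norm_sq, Complex.normSq_apply]
  simp only [Complex.sub_re, Complex.sub_im, Complex.one_re, Complex.one_im,
    Complex.exp_ofReal_mul_I_re, Complex.exp_ofReal_mul_I_im]
  nlinarith

lemma torusCoeff_sub {d : ℕ} {f g : Torus d → ℂ} (hf : MemLp f 2 volume)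
    (hg : MemLp g 2 volume) (q : Fin d → ℤ) :
    torusCoeff (fun x => f x - g x) q = torusCoeff f q - torusCoeff g q := by
  have hint : ∀ {h : Torus d → ℂ}, MemLp h 2 volume →
      Integrable (fun x => mFourier (-q) x * h x) volume := by
    intro h hh
    refine (hh.integrable (by norm_num)).bdd_mul (c := 1)
      (mFourier (-q)).continuous.aestronglyMeasurable ?_
    exact Eventually.of_forall fun x => (norm_mFourier_apply _ _).le
  unfold torusCoeff
  rw [← integral_sub (hint hf) (hint hg)]
  simp only [mul_sub]

lemma sum_sq_torusCoeff_mul_le {d : ℕ} {f : Torus d → ℂ} (hf : MemLp f 2 volume) (y : Torus d)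
    {B : ℝ} (hB : ∀ x, ‖f (x + y) - f x‖ ≤ B) (F : Finset (Fin d → ℤ)) :
    ∑ q ∈ F, ‖mFourier q y - 1‖ ^ 2 * ‖torusCoeff f q‖ ^ 2 ≤ B ^ 2 := by
  have hy : MemLp (fun x => f (x + y)) 2 volume :=
    hf.comp_measurePreserving (measurePreserving_add_right volume y)
  have hd : MemLp (fun x => f (x + y) - f x) 2 volume := hy.sub hf
  have hs := hasSum_sq_torusCoeff hd
  have hle : ∫ x, ‖f (x + y) - f x‖ ^ 2 ≤ B ^ 2 := by
    calc _ ≤ ∫ _x : Torus d, B ^ 2 := by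
          refine integral_mono_of_nonneg (Eventually.of_forall fun x => by positivity)
            (integrable_const _) (Eventually.of_forall fun x => ?_)
          exact pow_le_pow_left₀ (norm_nonneg _) (hB x) 2
      _ = B ^ 2 := by simp
  refine le_trans (le_of_eq ?_) ((sum_le_hasSum F (fun q _ => by positivity) hs).trans hle)
  refine Finset.sum_congr rfl fun q _ => ?_
  rw [torusCoeff_sub hy hf, torusCoeff_comp_add, ← mul_pow, ← norm_mul, sub_mul, one_mul]

/-- Regularity in the direction `v` controls the Fourier coefficients at frequencies with large
component along `v`. -/
lemma sum_sq_torusCoeff_le_of_direction {d : ℕ} {f : Torus d → ℂ} (hf : MemLp f 2 volume)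
    {η : ℝ} (hη : 0 < η) (v : Fin d → ℝ) {H : ℝ}
    (hH : ∀ t : ℝ, 0 < t → ∀ x, ‖f (x + torusProj (t • v)) - f x‖ ≤ H * t ^ η)
    {R : ℝ} (hR : 0 < R) (F : Finset (Fin d → ℤ)) (hF : ∀ q ∈ F, R ≤ |∑ i, q i * v i|) :
    ∑ q ∈ F, ‖torusCoeff f q‖ ^ 2 ≤ H ^ 2 * (1 - (2 : ℝ) ^ (-(2 * η)))⁻¹ * R ^ (-(2 * η)) := by
  set ρ : ℝ := (2 : ℝ) ^ (-(2 * η)) with hρ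
  have hρ0 : 0 < ρ := by positivity
  have hρ1 : ρ < 1 := Real.rpow_lt_one_of_one_lt_of_neg one_lt_two (by linarith)
  have hJ : ∀ q : Fin d → ℤ, ∃ j : ℕ, q ∈ F →
      (2 : ℝ) ^ j * R ≤ |∑ i, q i * v i| ∧ |∑ i, q i * v i| ≤ 2 * (2 ^ j * R) := by
    intro q
    by_cases hq : q ∈ F
    · obtain ⟨j, h1, h2⟩ := exists_nat_pow_near (x := |∑ i, q i * v i| / R) (y := 2)
        (by rw [le_div_iff₀ hR, one_mul]; exact hF q hq) one_lt_two
      refine ⟨j, fun _ => ⟨(le_div_iff₀ hR).1 h1, ?_⟩⟩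
      have := (div_lt_iff₀ hR).1 h2
      rw [pow_succ] at this
      linarith
    · exact ⟨0, fun h => absurd h hq⟩
  choose J hJ using hJ
  have hlevel : ∀ j : ℕ, ∑ q ∈ F with J q = j, ‖torusCoeff f q‖ ^ 2 ≤
      H ^ 2 * R ^ (-(2 * η)) * ρ ^ j := by
    intro j
    set t : ℝ := (4 * (2 ^ j * R))⁻¹ with ht
    have ht0 : 0 < t := by positivity
    have h1 := sum_sq_torusCoeff_mul_le hf (torusProj (t • v)) (hH t ht0) {q ∈ F | J q = j}
    have h2 : ∑ q ∈ F with J q = j, ‖torusCoeff f q‖ ^ 2 ≤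
        ∑ q ∈ F with J q = j,
          ‖mFourier q (torusProj (t • v)) - 1‖ ^ 2 * ‖torusCoeff f q‖ ^ 2 := by
      refine Finset.sum_le_sum fun q hq => ?_
      obtain ⟨hqF, hqj⟩ := Finset.mem_filter.1 hq
      obtain ⟨ha, hb⟩ := hJ q hqF
      rw [hqj] at ha hb
      have hsum : ∑ i, (q i : ℝ) * (t • v) i = t * ∑ i, q i * v i := by
        rw [Finset.mul_sum]
        refine Finset.sum_congr rfl fun i _ => ?_
        rw [Pi.smul_apply, smul_eq_mul]; ring
      have h3 : 2 ≤ ‖mFourier q (torusProj (t • v)) - 1‖ ^ 2 := by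
        rw [mFourier_torusProj, hsum]
        have htP : t * (2 ^ j * R) = 1 / 4 := by rw [ht]; field_simp
        refine two_le_norm_exp_sub_one_sq ?_ ?_
        · rw [abs_mul, abs_of_pos ht0, ← htP]
          gcongr
        · rw [abs_mul, abs_of_pos ht0]
          calc t * |∑ i, (q i : ℝ) * v i| ≤ t * (2 * (2 ^ j * R)) := by gcongr
            _ = 2 * (t * (2 ^ j * R)) := by ring
            _ = 1 / 2 := by rw [htP]; norm_num
      nlinarith [sq_nonneg ‖torusCoeff f q‖]
    refine (h2.trans h1).trans ?_
    rw [mul_pow, mul_assoc]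
    refine mul_le_mul_of_nonneg_left ?_ (sq_nonneg H)
    have h5 : ((2 : ℝ) ^ j * R) ^ (-(2 * η)) = R ^ (-(2 * η)) * ρ ^ j := by
      rw [Real.mul_rpow (by positivity) hR.le, mul_comm, hρ, ← Real.rpow_natCast,
        ← Real.rpow_natCast, ← Real.rpow_mul two_pos.le, ← Real.rpow_mul two_pos.le,
        mul_comm (j : ℝ)]
    rw [← h5, ← Real.rpow_natCast, ← Real.rpow_mul ht0.le, ht, Real.inv_rpow (by positivity),
      ← Real.rpow_neg (by positivity)]
    have h6 : -(η * ((2 : ℕ) : ℝ)) = -(2 * η) := by push_cast; ring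
    rw [h6]
    have hp : 0 < (2 : ℝ) ^ j * R := by positivity
    exact Real.rpow_le_rpow_of_nonpos hp (by linarith) (by linarith)
  have hgeom : ∑ j ∈ F.image J, ρ ^ j ≤ (1 - ρ)⁻¹ :=
    sum_le_hasSum _ (fun j _ => by positivity) (hasSum_geometric_of_lt_one hρ0.le hρ1)
  calc ∑ q ∈ F, ‖torusCoeff f q‖ ^ 2
      = ∑ j ∈ F.image J, ∑ q ∈ F with J q = j, ‖torusCoeff f q‖ ^ 2 :=
        (Finset.sum_fiberwise_of_maps_to (fun q hq => Finset.mem_image_of_mem J hq) _).symm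
    _ ≤ ∑ j ∈ F.image J, H ^ 2 * R ^ (-(2 * η)) * ρ ^ j :=
        Finset.sum_le_sum fun j _ => hlevel j
    _ = H ^ 2 * R ^ (-(2 * η)) * ∑ j ∈ F.image J, ρ ^ j := by rw [Finset.mul_sum]
    _ ≤ H ^ 2 * R ^ (-(2 * η)) * (1 - ρ)⁻¹ := by gcongr
    _ = _ := by ring

/-- The real part (`b = true`) or imaginary part (`b = false`) of a complex number. -/
def rePart (b : Bool) (z : ℂ) : ℝ := if b then z.re else z.im

lemma abs_rePart_le (b : Bool) (z : ℂ) : |rePart b z| ≤ ‖z‖ := by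
  cases b
  · exact Complex.abs_im_le_norm z
  · exact Complex.abs_re_le_norm z

lemma rePart_sum_intCast_mul {ι : Type*} (s : Finset ι) (b : Bool) (q : ι → ℤ) (z : ι → ℂ) :
    rePart b (∑ j ∈ s, z j * q j) = ∑ j ∈ s, q j * rePart b (z j) := by
  cases b <;> simp [rePart, mul_comm]

/-- Regularity in the directions given by the rows of `B` controls the Fourier coefficients at
frequencies `q` with `B q` large. -/
lemma sum_sq_torusCoeff_le_of_matrix {d : ℕ} {f : Torus d → ℂ} (hf : MemLp f 2 volume)
    {η : ℝ} (hη : 0 < η) (B : Matrix (Fin d) (Fin d) ℂ) {H : ℝ}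
    (hH : ∀ i b, ∀ t : ℝ, 0 < t → ∀ x,
      ‖f (x + torusProj (t • fun j => rePart b (B i j))) - f x‖ ≤ H * t ^ η)
    {R : ℝ} (hR : 0 < R) (F : Finset (Fin d → ℤ))
    (hF : ∀ q ∈ F, R ≤ ‖B *ᵥ fun i => (q i : ℂ)‖) :
    ∑ q ∈ F, ‖torusCoeff f q‖ ^ 2 ≤
      2 * d * (H ^ 2 * (1 - (2 : ℝ) ^ (-(2 * η)))⁻¹ * (R / 2) ^ (-(2 * η))) := by
  set v : Fin d × Bool → Fin d → ℝ := fun p j => rePart p.2 (B p.1 j) with hv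
  have hex : ∀ q ∈ F, ∃ p : Fin d × Bool, R / 2 ≤ |∑ j, q j * v p j| := by
    intro q hq
    by_contra! hcon
    refine absurd (hF q hq) (not_le.2 ((pi_norm_lt_iff hR).2 fun i => ?_))
    have h : ∀ b, |rePart b ((B *ᵥ fun i => (q i : ℂ)) i)| < R / 2 := by
      intro b
      have := hcon (i, b)
      rwa [← rePart_sum_intCast_mul] at this
    calc ‖(B *ᵥ fun i => (q i : ℂ)) i‖ ≤ _ := Complex.norm_le_abs_re_add_abs_im _
      _ < R / 2 + R / 2 := add_lt_add (h true) (h false)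
      _ = R := by ring
  calc ∑ q ∈ F, ‖torusCoeff f q‖ ^ 2
      ≤ ∑ q ∈ F, ∑ p : Fin d × Bool,
          if R / 2 ≤ |∑ j, q j * v p j| then ‖torusCoeff f q‖ ^ 2 else 0 := by
        refine Finset.sum_le_sum fun q hq => ?_
        obtain ⟨p, hp⟩ := hex q hq
        refine le_trans (le_of_eq (if_pos hp).symm) (Finset.single_le_sum
          (f := fun p => if R / 2 ≤ |∑ j, q j * v p j| then ‖torusCoeff f q‖ ^ 2 else 0)
          (fun p _ => ?_) (Finset.mem_univ p))
        split_ifs <;> positivity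
    _ = ∑ p : Fin d × Bool, ∑ q ∈ F with R / 2 ≤ |∑ j, q j * v p j|, ‖torusCoeff f q‖ ^ 2 := by
        rw [Finset.sum_comm]
        simp only [Finset.sum_filter]
    _ ≤ ∑ _p : Fin d × Bool,
          H ^ 2 * (1 - (2 : ℝ) ^ (-(2 * η)))⁻¹ * (R / 2) ^ (-(2 * η)) := by
        refine Finset.sum_le_sum fun p _ => ?_
        exact sum_sq_torusCoeff_le_of_direction hf hη (v p) (hH p.1 p.2) (half_pos hR) _
          fun q hq => (Finset.mem_filter.1 hq).2
    _ = _ := by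
        rw [Finset.sum_const, Finset.card_univ, Fintype.card_prod, Fintype.card_fin,
          Fintype.card_bool, nsmul_eq_mul]
        push_cast
        ring

lemma sum_mul_le_mul_of_sum_sq_le {ι : Type*} (s : Finset ι) {a b : ι → ℝ} {A B : ℝ}
    (hA : 0 ≤ A) (hB : 0 ≤ B) (ha : ∑ i ∈ s, a i ^ 2 ≤ A ^ 2) (hb : ∑ i ∈ s, b i ^ 2 ≤ B ^ 2) :
    ∑ i ∈ s, a i * b i ≤ A * B := by
  refine (Real.sum_mul_le_sqrt_mul_sqrt s a b).trans ?_
  exact mul_le_mul (Real.sqrt_le_iff.2 ⟨hA, ha⟩) (Real.sqrt_le_iff.2 ⟨hB, hb⟩)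
    (Real.sqrt_nonneg _) hA

/-- Covariances estimated through a dichotomy on frequencies. -/
lemma norm_covC_le_of_dichotomy {d : ℕ} {g h : Torus d → ℂ} (hg : MemLp g 2 volume)
    (hh : MemLp h 2 volume) {A A' : Matrix (Fin d) (Fin d) ℤ} (hA : A' * A = 1)
    (P Q : (Fin d → ℤ) → Prop) (hPQ : ∀ q, q ≠ 0 → P q ∨ Q q) {α β G H : ℝ} (hα : 0 ≤ α)
    (hβ : 0 ≤ β) (hG0 : 0 ≤ G) (hH0 : 0 ≤ H)
    (hP : ∀ F : Finset (Fin d → ℤ), (∀ q ∈ F, P q) →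
      ∑ q ∈ F, ‖torusCoeff (fun x => conj (g x)) (Aᵀ *ᵥ q)‖ ^ 2 ≤ α ^ 2)
    (hQ : ∀ F : Finset (Fin d → ℤ), (∀ q ∈ F, Q q) →
      ∑ q ∈ F, ‖torusCoeff h q‖ ^ 2 ≤ β ^ 2)
    (hG : ∀ x, ‖g x‖ ≤ G) (hH : ∀ x, ‖h x‖ ≤ H) :
    ‖covC volume g (fun x => h (torusAut A x))‖ ≤ α * H + G * β := by
  classical
  have hA' : A * A' = 1 := mul_eq_one_comm.1 hA
  have hgc : MemLp (fun x => conj (g x)) 2 volume := hg.star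
  have hhA : MemLp (fun x => h (torusAut A x)) 2 volume :=
    hh.comp_measurePreserving (measurePreserving_torusAut hA')
  have hsq : ∀ {f : Torus d → ℂ} {B : ℝ}, MemLp f 2 volume → (∀ x, ‖f x‖ ≤ B) →
      ∀ F : Finset (Fin d → ℤ), ∑ q ∈ F, ‖torusCoeff f q‖ ^ 2 ≤ B ^ 2 := by
    intro f B hf hB F
    refine (sum_le_hasSum F (fun q _ => by positivity) (hasSum_sq_torusCoeff hf)).trans ?_
    calc _ ≤ ∫ _x : Torus d, B ^ 2 :=
          integral_mono_of_nonneg (Eventually.of_forall fun x => by positivity)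
            (integrable_const _)
            (Eventually.of_forall fun x => pow_le_pow_left₀ (norm_nonneg _) (hB x) 2)
      _ = B ^ 2 := by simp
  have hleft : ∀ q : Fin d → ℤ, A'ᵀ *ᵥ (Aᵀ *ᵥ q) = q := fun q => by
    rw [mulVec_mulVec, ← transpose_mul, hA', transpose_one, one_mulVec]
  have hright : ∀ q : Fin d → ℤ, Aᵀ *ᵥ (A'ᵀ *ᵥ q) = q := fun q => by
    rw [mulVec_mulVec, ← transpose_mul, hA, transpose_one, one_mulVec]
  let e : (Fin d → ℤ) ≃ (Fin d → ℤ) := ⟨fun q => Aᵀ *ᵥ q, fun q => A'ᵀ *ᵥ q, hleft, hright⟩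
  have hsum := hasSum_conj_torusCoeff_mul hgc hhA
  rw [← e.hasSum_iff] at hsum
  set u : (Fin d → ℤ) → ℂ := fun q =>
    conj (torusCoeff (fun x => conj (g x)) (Aᵀ *ᵥ q)) * torusCoeff h q with hu
  have hu' : (fun q => conj (torusCoeff (fun x => conj (g x)) q) *
      torusCoeff (fun x => h (torusAut A x)) q) ∘ e = u := by
    funext q
    simp only [Function.comp_apply, hu]
    change _ * torusCoeff (fun x => h (torusAut A x)) (Aᵀ *ᵥ q) = _
    rw [torusCoeff_comp_torusAut hA]
    rfl
  rw [hu'] at hsum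
  have hu0 : u 0 = (∫ x, g x) * ∫ x, h (torusAut A x) := by
    have h1 := congrFun hu' 0
    rw [← h1]
    simp only [Function.comp_apply]
    have he0 : e 0 = 0 := mulVec_zero (A := Aᵀ)
    rw [he0]
    simp only [torusCoeff, neg_zero, mFourier_zero, ContinuousMap.one_apply, one_mul]
    rw [integral_conj, Complex.conj_conj]
  have hcov : covC volume g (fun x => h (torusAut A x)) =
      (∫ x, conj (conj (g x)) * h (torusAut A x)) - u 0 := by
    rw [hu0, covC]
    simp only [Complex.conj_conj]
  have hlim := (hsum.sub_const (u 0)).norm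
  rw [hcov]
  refine le_of_tendsto hlim ?_
  filter_upwards [eventually_ge_atTop ({0} : Finset (Fin d → ℤ))] with F hF
  rw [← Finset.sum_erase_add F u (hF (Finset.mem_singleton_self 0)), add_sub_cancel_right]
  set E := F.erase 0 with hE
  set a : (Fin d → ℤ) → ℝ := fun q => ‖torusCoeff (fun x => conj (g x)) (Aᵀ *ᵥ q)‖ with ha
  set b : (Fin d → ℤ) → ℝ := fun q => ‖torusCoeff h q‖ with hb
  have hnorm : ∀ q, ‖u q‖ = a q * b q := fun q => by simp [hu, ha, hb]
  have hbF : ∀ F' : Finset (Fin d → ℤ), ∑ q ∈ F', b q ^ 2 ≤ H ^ 2 := hsq hh hH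
  have haF : ∀ F' : Finset (Fin d → ℤ), ∑ q ∈ F', a q ^ 2 ≤ G ^ 2 := by
    intro F'
    have := hsq hgc (fun x => by rw [RCLike.norm_conj]; exact hG x) (F'.map e.toEmbedding)
    rwa [Finset.sum_map] at this
  calc ‖∑ q ∈ E, u q‖ ≤ ∑ q ∈ E, a q * b q :=
        (norm_sum_le _ _).trans (le_of_eq (Finset.sum_congr rfl fun q _ => hnorm q))
    _ = ∑ q ∈ E with P q, a q * b q + ∑ q ∈ E with ¬ P q, a q * b q :=
        (Finset.sum_filter_add_sum_filter_not E P _).symm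
    _ ≤ α * H + G * β := by
        refine add_le_add ?_ ?_
        · exact sum_mul_le_mul_of_sum_sq_le _ hα hH0
            (hP _ fun q hq => (Finset.mem_filter.1 hq).2) (hbF _)
        · refine sum_mul_le_mul_of_sum_sq_le _ hG0 hβ (haF _) (hQ _ fun q hq => ?_)
          obtain ⟨hq1, hq2⟩ := Finset.mem_filter.1 hq
          exact (hPQ q (Finset.ne_of_mem_erase hq1)).resolve_left hq2

lemma norm_le_supN {M : Type*} {g : M → ℂ} (hg : BddF g) (x : M) : ‖g x‖ ≤ supN g := by
  obtain ⟨c, hc⟩ := hg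
  exact le_ciSup (f := fun x => ‖g x‖) ⟨c, by rintro _ ⟨y, rfl⟩; exact hc y⟩ x

lemma supN_nonneg {M : Type*} (g : M → ℂ) : 0 ≤ supN g :=
  Real.iSup_nonneg fun _ => norm_nonneg _

lemma eq_zero_of_supN_eq_zero {M : Type*} {g : M → ℂ} (hg : BddF g) (h : supN g = 0) (x : M) :
    g x = 0 :=
  norm_le_zero_iff.1 (h ▸ norm_le_supN hg x)

lemma torusDist_pos {d : ℕ} {x y : Torus d} (h : x ≠ y) : 0 < torusDist x y := by
  obtain ⟨i, hi⟩ := Function.ne_iff.1 h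
  refine Real.sqrt_pos.2 (Finset.sum_pos' (fun i _ => by positivity) ⟨i, Finset.mem_univ i, ?_⟩)
  have := norm_pos_iff.2 (sub_ne_zero.2 hi)
  positivity

open Classical in
/-- The Lipschitz constant of `g` with respect to a weight `w`, made infinite on non-measurable
functions. -/
def weightedLip {d : ℕ} (w : Torus d → Torus d → ℝ≥0∞) (g : Torus d → ℂ) : ℝ≥0∞ :=
  (if AEStronglyMeasurable g volume then 0 else ∞) +
    ⨆ x, ⨆ y, ENNReal.ofReal ‖g x - g y‖ / w x y

section weightedLip

variable {d : ℕ} {w : Torus d → Torus d → ℝ≥0∞}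

lemma weightedLip_of_measurable {g : Torus d → ℂ} (hg : AEStronglyMeasurable g volume) :
    weightedLip w g = ⨆ x, ⨆ y, ENNReal.ofReal ‖g x - g y‖ / w x y := by
  rw [weightedLip, if_pos hg, zero_add]

lemma weightedLip_of_not_measurable {g : Torus d → ℂ} (hg : ¬ AEStronglyMeasurable g volume) :
    weightedLip w g = ∞ := by
  rw [weightedLip, if_neg hg, top_add]

lemma weightedLip_zero : weightedLip w (fun _ => 0) = 0 := by
  rw [weightedLip_of_measurable aestronglyMeasurable_const]
  simp

lemma div_le_weightedLip (g : Torus d → ℂ) (x y : Torus d) :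
    ENNReal.ofReal ‖g x - g y‖ / w x y ≤ weightedLip w g :=
  (le_iSup₂ (f := fun x y => ENNReal.ofReal ‖g x - g y‖ / w x y) x y).trans le_add_self

lemma norm_sub_le_of_weightedLip_ne_top {g : Torus d → ℂ} (hg : weightedLip w g ≠ ∞)
    {x y : Torus d} {B : ℝ} (hB : 0 ≤ B) (hw : w x y ≤ ENNReal.ofReal B) :
    ‖g x - g y‖ ≤ (weightedLip w g).toReal * B := by
  have h := div_le_weightedLip (w := w) g x y
  rw [ENNReal.div_le_iff_le_mul (Or.inr hg) (Or.inl (hw.trans_lt ENNReal.ofReal_lt_top).ne)] at h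
  have h2 := h.trans (mul_le_mul_right hw _)
  rw [← ENNReal.ofReal_toReal hg, ← ENNReal.ofReal_mul ENNReal.toReal_nonneg] at h2
  exact (ENNReal.ofReal_le_ofReal_iff (by positivity)).1 h2

lemma weightedLip_comp_le {φ : Torus d → Torus d} (hφ : MeasurePreserving φ volume volume)
    {C : ℝ≥0∞} (hC0 : C ≠ 0) (hC : C ≠ ∞) (hw : ∀ x y, w (φ x) (φ y) ≤ C * w x y)
    (g : Torus d → ℂ) : weightedLip w (fun x => g (φ x)) ≤ C * weightedLip w g := by
  by_cases hg : AEStronglyMeasurable g volume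
  · rw [weightedLip_of_measurable (g := fun x => g (φ x)) (hg.comp_measurePreserving hφ)]
    refine iSup₂_le fun x y => ?_
    calc ENNReal.ofReal ‖g (φ x) - g (φ y)‖ / w x y
        = C * (ENNReal.ofReal ‖g (φ x) - g (φ y)‖ / (C * w x y)) := by
          rw [← mul_div_assoc, ENNReal.mul_div_mul_left _ _ hC0 hC]
      _ ≤ C * (ENNReal.ofReal ‖g (φ x) - g (φ y)‖ / w (φ x) (φ y)) := by
          gcongr
          exact hw x y
      _ ≤ C * weightedLip w g := by
          gcongr
          exact div_le_weightedLip g _ _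
  · rw [weightedLip_of_not_measurable hg, ENNReal.mul_top hC0]
    exact le_top

lemma weightedLip_mul_le {g g' : Torus d → ℂ} (hg : BddF g) (hg' : BddF g') :
    weightedLip w (fun x => g x * g' x) ≤
      ENNReal.ofReal (supN g) * weightedLip w g' + ENNReal.ofReal (supN g') * weightedLip w g := by
  rcases (supN_nonneg g).eq_or_lt with h0 | h0
  · simp [eq_zero_of_supN_eq_zero hg h0.symm, weightedLip_zero]
  rcases (supN_nonneg g').eq_or_lt with h0' | h0'
  · simp [eq_zero_of_supN_eq_zero hg' h0'.symm, weightedLip_zero]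
  have hp := (ENNReal.ofReal_pos.2 h0).ne'
  have hp' := (ENNReal.ofReal_pos.2 h0').ne'
  by_cases hm : AEStronglyMeasurable g volume
  swap
  · rw [weightedLip_of_not_measurable hm, ENNReal.mul_top hp', add_top]
    exact le_top
  by_cases hm' : AEStronglyMeasurable g' volume
  swap
  · rw [weightedLip_of_not_measurable hm', ENNReal.mul_top hp, top_add]
    exact le_top
  rw [weightedLip_of_measurable (g := fun x => g x * g' x) (hm.mul hm')]
  refine iSup₂_le fun x y => ?_
  have hxy : ‖g x * g' x - g y * g' y‖ ≤ supN g * ‖g' x - g' y‖ + supN g' * ‖g x - g y‖ := by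
    have : g x * g' x - g y * g' y = g x * (g' x - g' y) + g' y * (g x - g y) := by ring
    rw [this]
    refine (norm_add_le _ _).trans ?_
    rw [norm_mul, norm_mul]
    gcongr
    · exact norm_le_supN hg x
    · exact norm_le_supN hg' y
  calc ENNReal.ofReal ‖g x * g' x - g y * g' y‖ / w x y
      ≤ (ENNReal.ofReal (supN g) * ENNReal.ofReal ‖g' x - g' y‖ +
          ENNReal.ofReal (supN g') * ENNReal.ofReal ‖g x - g y‖) / w x y := by
        rw [← ENNReal.ofReal_mul h0.le, ← ENNReal.ofReal_mul h0'.le,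
          ← ENNReal.ofReal_add (by positivity) (by positivity)]
        gcongr
    _ = ENNReal.ofReal (supN g) * (ENNReal.ofReal ‖g' x - g' y‖ / w x y) +
          ENNReal.ofReal (supN g') * (ENNReal.ofReal ‖g x - g y‖ / w x y) := by
        rw [ENNReal.add_div, mul_div_assoc, mul_div_assoc]
    _ ≤ _ := by
        gcongr
        · exact div_le_weightedLip g' x y
        · exact div_le_weightedLip g x y

lemma ofReal_norm_sub_div_le_holderC {η : ℝ} (g : Torus d → ℂ) {x y : Torus d} (h : x ≠ y) :
    ENNReal.ofReal (‖g x - g y‖ / torusDist x y ^ η) ≤ holderC η g :=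
  le_iSup_of_le x (le_iSup_of_le y (le_iSup_of_le h le_rfl))

lemma continuous_of_holderC_ne_top {η : ℝ} (hη : 0 < η) {g : Torus d → ℂ}
    (hg : holderC η g ≠ ∞) : Continuous g := by
  have hle : ∀ x y, ‖g y - g x‖ ≤ (holderC η g).toReal * torusDist y x ^ η := by
    intro x y
    have hn := Real.rpow_nonneg (torusDist_nonneg y x) η
    by_cases h : y = x
    · rw [h, sub_self, norm_zero]
      exact mul_nonneg ENNReal.toReal_nonneg (h ▸ hn)
    · rw [← div_le_iff₀ (Real.rpow_pos_of_pos (torusDist_pos h) η)]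
      exact (ENNReal.ofReal_le_iff_le_toReal hg).1 (ofReal_norm_sub_div_le_holderC g h)
  refine continuous_iff_continuousAt.2 fun x => ?_
  refine tendsto_iff_norm_sub_tendsto_zero.2 (squeeze_zero (fun _ => norm_nonneg _) (hle x) ?_)
  have hc : Continuous fun y : Torus d => (holderC η g).toReal * torusDist y x ^ η := by
    unfold torusDist
    refine continuous_const.mul (Continuous.rpow_const (by fun_prop) fun _ => Or.inr hη.le)
  have h0 := hc.tendsto x
  simpa [torusDist, Real.zero_rpow hη.ne'] using h0

lemma weightedLip_le_holderC {η : ℝ} (hη : 0 < η)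
    (hw : ∀ x y, ENNReal.ofReal (torusDist x y ^ η) ≤ w x y) (g : Torus d → ℂ) :
    weightedLip w g ≤ holderC η g := by
  by_cases hg : holderC η g = ∞
  · rw [hg]; exact le_top
  rw [weightedLip_of_measurable (continuous_of_holderC_ne_top hη hg).aestronglyMeasurable]
  refine iSup₂_le fun x y => ?_
  by_cases h : x = y
  · simp [h]
  calc ENNReal.ofReal ‖g x - g y‖ / w x y
      ≤ ENNReal.ofReal ‖g x - g y‖ / ENNReal.ofReal (torusDist x y ^ η) := by
        gcongr
        exact hw x y
    _ = ENNReal.ofReal (‖g x - g y‖ / torusDist x y ^ η) :=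
        (ENNReal.ofReal_div_of_pos (Real.rpow_pos_of_pos (torusDist_pos h) η)).symm
    _ ≤ holderC η g := ofReal_norm_sub_div_le_holderC g h

end weightedLip

lemma map_intCast_transpose_pow {ι : Type*} [Fintype ι] [DecidableEq ι] (A : Matrix ι ι ℤ)
    (n : ℕ) : Aᵀ.map (fun a => (a : ℂ)) ^ n = ((A ^ n)ᵀ).map (fun a => (a : ℂ)) := by
  rw [transpose_pow]
  exact (Matrix.map_pow (f := Int.castRingHom ℂ) Aᵀ n).symm

lemma weightedLip_conj {d : ℕ} (w : Torus d → Torus d → ℝ≥0∞) (g : Torus d → ℂ) :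
    weightedLip w (fun x => conj (g x)) = weightedLip w g := by
  have hm : AEStronglyMeasurable (fun x => conj (g x)) volume ↔
      AEStronglyMeasurable g volume := by
    refine ⟨fun h => ?_, fun h => h.star⟩
    have h2 := h.star
    simpa [Pi.star_def] using h2
  have hn : ∀ x y, ‖conj (g x) - conj (g y)‖ = ‖g x - g y‖ := fun x y => by
    rw [← map_sub, RCLike.norm_conj]
  by_cases h : AEStronglyMeasurable g volume
  · rw [weightedLip_of_measurable h, weightedLip_of_measurable (hm.2 h)]
    simp only [hn]
  · rw [weightedLip_of_not_measurable h, weightedLip_of_not_measurable (mt hm.1 h)]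

/-- The weight `sup_k d(A^k x, A^k y)^η / (k + 1)^β` attached to the forward orbits of a toral
endomorphism `A`. -/
def orbitWeight {d : ℕ} (A : Matrix (Fin d) (Fin d) ℤ) (η β : ℝ) (x y : Torus d) : ℝ≥0∞ :=
  ⨆ k : ℕ, ENNReal.ofReal
    (torusDist (torusAut (A ^ k) x) (torusAut (A ^ k) y) ^ η / ((k : ℝ) + 1) ^ β)

section orbitWeight

variable {d : ℕ} (A : Matrix (Fin d) (Fin d) ℤ) (η : ℝ)

lemma ofReal_torusDist_le_orbitWeight (β : ℝ) (x y : Torus d) :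
    ENNReal.ofReal (torusDist x y ^ η) ≤ orbitWeight A η β x y := by
  refine le_iSup_of_le 0 (le_of_eq ?_)
  simp [torusAut_one]

lemma orbitWeight_torusAut_pow_le {β : ℝ} (hβ : 0 ≤ β) (m : ℕ) (x y : Torus d) :
    orbitWeight A η β (torusAut (A ^ m) x) (torusAut (A ^ m) y) ≤
      ENNReal.ofReal (((m : ℝ) + 1) ^ β) * orbitWeight A η β x y := by
  refine iSup_le fun k => ?_
  refine le_trans ?_ (mul_le_mul_right (le_iSup (fun k : ℕ => ENNReal.ofReal
    (torusDist (torusAut (A ^ k) x) (torusAut (A ^ k) y) ^ η / ((k : ℝ) + 1) ^ β)) (k + m)) _)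
  rw [← ENNReal.ofReal_mul (by positivity)]
  refine ENNReal.ofReal_le_ofReal ?_
  rw [← torusAut_mul, ← torusAut_mul, ← pow_add]
  have hk : 0 < ((k : ℝ) + 1) ^ β := by positivity
  have hkm : 0 < (((k + m : ℕ) : ℝ) + 1) ^ β := by positivity
  have hle : (((k + m : ℕ) : ℝ) + 1) ^ β ≤ ((m : ℝ) + 1) ^ β * ((k : ℝ) + 1) ^ β := by
    rw [← Real.mul_rpow (by positivity) (by positivity)]
    refine Real.rpow_le_rpow (by positivity) ?_ hβ
    push_cast
    nlinarith [mul_nonneg (Nat.cast_nonneg (α := ℝ) m) (Nat.cast_nonneg (α := ℝ) k)]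
  rw [← mul_div_assoc, div_le_div_iff₀ hk hkm]
  have hD := Real.rpow_nonneg
    (torusDist_nonneg (torusAut (A ^ (k + m)) x) (torusAut (A ^ (k + m)) y)) η
  calc _ ≤ _ := mul_le_mul_of_nonneg_left hle hD
    _ = _ := by ring

variable {A η}

lemma orbitWeight_translate_le (hη : 0 ≤ η) {B : Matrix (Fin d) (Fin d) ℂ} {K : ℝ} (hK : 0 ≤ K)
    {D : ℕ}
    (hB : ∀ (k : ℕ) i j, ‖(B * Aᵀ.map (fun a => (a : ℂ)) ^ k) i j‖ ≤ K * ((k : ℝ) + 1) ^ D)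
    (i : Fin d) (b : Bool) {t : ℝ} (ht : 0 < t) (x : Torus d) :
    orbitWeight A η (D * η) (x + torusProj (t • fun j => rePart b (B i j))) x ≤
      ENNReal.ofReal ((Real.sqrt d * K) ^ η * t ^ η) := by
  refine iSup_le fun k => ENNReal.ofReal_le_ofReal ?_
  have hcoord : ∀ j, |((A ^ k).map (fun a => (a : ℝ)) *ᵥ (t • fun j => rePart b (B i j))) j| ≤
      t * (K * ((k : ℝ) + 1) ^ D) := by
    intro j
    rw [mulVec_smul, Pi.smul_apply, smul_eq_mul, abs_mul, abs_of_pos ht]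
    refine mul_le_mul_of_nonneg_left ?_ ht.le
    refine le_trans (le_of_eq ?_) ((abs_rePart_le b _).trans (hB k i j))
    rw [map_intCast_transpose_pow, Matrix.mul_apply]
    simp only [Matrix.map_apply, transpose_apply]
    rw [rePart_sum_intCast_mul]
    rfl
  have hdist := torusDist_add_left_le (torusAut (A ^ k) x) _
    (B := t * (K * ((k : ℝ) + 1) ^ D)) (by positivity) hcoord
  rw [torusAut_add, torusAut_torusProj]
  rw [div_le_iff₀ (by positivity), Real.rpow_mul (by positivity), Real.rpow_natCast,
    ← Real.mul_rpow (by positivity) ht.le, ← Real.mul_rpow (by positivity) (by positivity)]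
  refine Real.rpow_le_rpow (torusDist_nonneg _ _) (hdist.trans (le_of_eq ?_)) hη
  ring

/-- Decay of the Fourier coefficients of functions which are Lipschitz for an orbit weight. -/
lemma exists_sum_sq_torusCoeff_le (hη : 0 < η) {B : Matrix (Fin d) (Fin d) ℂ} {K : ℝ}
    (hK : 0 ≤ K) {D : ℕ}
    (hB : ∀ (k : ℕ) i j, ‖(B * Aᵀ.map (fun a => (a : ℂ)) ^ k) i j‖ ≤ K * ((k : ℝ) + 1) ^ D) :
    ∃ Λ : ℝ, 0 ≤ Λ ∧ ∀ f : Torus d → ℂ, MemLp f 2 volume →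
      weightedLip (orbitWeight A η (D * η)) f ≠ ∞ → ∀ R : ℝ, 0 < R →
      ∀ F : Finset (Fin d → ℤ), (∀ q ∈ F, R ≤ ‖B *ᵥ fun i => (q i : ℂ)‖) →
        ∑ q ∈ F, ‖torusCoeff f q‖ ^ 2 ≤
          (Λ * (weightedLip (orbitWeight A η (D * η)) f).toReal * R ^ (-η)) ^ 2 := by
  have hρ1 : (2 : ℝ) ^ (-(2 * η)) < 1 :=
    Real.rpow_lt_one_of_one_lt_of_neg one_lt_two (by linarith)
  have hρ2 : 0 ≤ 2 * d * (1 - (2 : ℝ) ^ (-(2 * η)))⁻¹ := by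
    have := sub_pos.2 hρ1
    positivity
  refine ⟨Real.sqrt (2 * d * (1 - (2 : ℝ) ^ (-(2 * η)))⁻¹) * (Real.sqrt d * K) ^ η * 2 ^ η,
    by positivity, fun f hf hfin R hR F hF => ?_⟩
  have h := sum_sq_torusCoeff_le_of_matrix hf hη B
    (H := (weightedLip (orbitWeight A η (D * η)) f).toReal * (Real.sqrt d * K) ^ η)
    (fun i b t ht x => by
      rw [mul_assoc]
      exact norm_sub_le_of_weightedLip_ne_top hfin (by positivity)
        (orbitWeight_translate_le hη.le hK hB i b ht x)) hR F hF
  refine h.trans (le_of_eq ?_)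
  have h2 : (R / 2) ^ (-(2 * η)) = (2 ^ η * R ^ (-η)) ^ 2 := by
    rw [Real.rpow_neg (by positivity), Real.rpow_neg hR.le, mul_comm 2 η,
      Real.rpow_mul (by positivity), Real.div_rpow hR.le two_pos.le, Real.rpow_two]
    have : 0 < R ^ η := by positivity
    field_simp
  rw [h2]
  simp only [mul_pow]
  rw [Real.sq_sqrt hρ2]
  ring

end orbitWeight

lemma memLp_two_of_weightedLip_ne_top {d : ℕ} {w : Torus d → Torus d → ℝ≥0∞} {g : Torus d → ℂ}
    (hg : BddF g) (hfin : weightedLip w g ≠ ∞) : MemLp g 2 volume := by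
  have hm : AEStronglyMeasurable g volume := by
    by_contra h
    exact hfin (weightedLip_of_not_measurable h)
  exact MemLp.of_bound hm (supN g) (Eventually.of_forall (norm_le_supN hg))

lemma covC_zero_left {Ω : Type*} [MeasurableSpace Ω] (μ : Measure Ω) (V : Ω → ℂ) :
    covC μ (fun _ => 0) V = 0 := by
  simp [covC]

lemma covC_zero_right {Ω : Type*} [MeasurableSpace Ω] (μ : Measure Ω) (U : Ω → ℂ) :
    covC μ U (fun _ => 0) = 0 := by
  simp [covC]

lemma map_intCast_pow_mulVec {ι : Type*} [Fintype ι] [DecidableEq ι] (S : Matrix ι ι ℤ) (n : ℕ)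
    (q : ι → ℤ) :
    (Sᵀ.map (fun a => (a : ℂ)) ^ n) *ᵥ (fun i => (q i : ℂ)) =
      fun i => ((((S ^ n)ᵀ *ᵥ q) i : ℤ) : ℂ) := by
  rw [map_intCast_transpose_pow]
  funext i
  simp [mulVec, dotProduct, -transpose_pow]

/-- Exponential decay of correlations for weighted Lipschitz observables. -/
lemma exists_norm_covC_le {d : ℕ} {S S' : Matrix (Fin d) (Fin d) ℤ} (hS : S' * S = 1)
    {η : ℝ} (hη : 0 < η) {Bu Bs : Matrix (Fin d) (Fin d) ℂ} {K : ℝ} (hK : 0 ≤ K) {D : ℕ}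
    {c σ : ℝ} (hc : 0 < c) (hσ : 1 < σ)
    (hBu : ∀ m i j, ‖(Bu * S'ᵀ.map (fun a => (a : ℂ)) ^ m) i j‖ ≤ K)
    (hBs : ∀ (k : ℕ) i j, ‖(Bs * Sᵀ.map (fun a => (a : ℂ)) ^ k) i j‖ ≤ K * ((k : ℝ) + 1) ^ D)
    (hdich : ∀ (n : ℕ) (q : Fin d → ℤ), q ≠ 0 →
      c * σ ^ n ≤ ‖Bu *ᵥ ((Sᵀ.map (fun a => (a : ℂ)) ^ n) *ᵥ fun i => (q i : ℂ))‖ ∨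
      c * σ ^ n ≤ ‖Bs *ᵥ fun i => (q i : ℂ)‖) :
    ∃ L : ℝ, 0 < L ∧ ∀ g h : Torus d → ℂ, BddF g → BddF h →
      weightedLip (orbitWeight S' η 0) g ≠ ∞ → weightedLip (orbitWeight S η (D * η)) h ≠ ∞ →
      ∀ n : ℕ, ‖covC volume g (fun x => h (torusAut (S ^ n) x))‖ ≤ L * (σ ^ (-η)) ^ n *
        (supN h * (weightedLip (orbitWeight S' η 0) g).toReal +
          supN g * (weightedLip (orbitWeight S η (D * η)) h).toReal) := by
  obtain ⟨Λ₁, hΛ₁, h₁⟩ := exists_sum_sq_torusCoeff_le (A := S') (D := 0) hη hK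
    (fun k i j => by simpa using hBu k i j)
  obtain ⟨Λ₂, hΛ₂, h₂⟩ := exists_sum_sq_torusCoeff_le (A := S) hη hK hBs
  simp only [Nat.cast_zero, zero_mul] at h₁
  refine ⟨(Λ₁ + Λ₂ + 1) * c ^ (-η), by positivity, fun g h hg hh hg1 hh2 n => ?_⟩
  have hσ0 : 0 < σ := one_pos.trans hσ
  have hR : 0 < c * σ ^ n := by positivity
  have hpow : S' ^ n * S ^ n = 1 := by
    rw [← (Commute.mul_pow (by rw [Commute, SemiconjBy, hS, mul_eq_one_comm.1 hS]) n), hS, one_pow]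
  have hgL := memLp_two_of_weightedLip_ne_top hg hg1
  have hhL := memLp_two_of_weightedLip_ne_top hh hh2
  set k₁ := (weightedLip (orbitWeight S' η 0) g).toReal with hk₁
  set k₂ := (weightedLip (orbitWeight S η (D * η)) h).toReal with hk₂
  have hk₁0 : 0 ≤ k₁ := ENNReal.toReal_nonneg
  have hk₂0 : 0 ≤ k₂ := ENNReal.toReal_nonneg
  have hsg := supN_nonneg g
  have hsh := supN_nonneg h
  have hcov := norm_covC_le_of_dichotomy hgL hhL hpow
    (fun q => c * σ ^ n ≤ ‖Bu *ᵥ ((Sᵀ.map (fun a => (a : ℂ)) ^ n) *ᵥ fun i => (q i : ℂ))‖)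
    (fun q => c * σ ^ n ≤ ‖Bs *ᵥ fun i => (q i : ℂ)‖) (hdich n)
    (α := Λ₁ * k₁ * (c * σ ^ n) ^ (-η)) (β := Λ₂ * k₂ * (c * σ ^ n) ^ (-η))
    (G := supN g) (H := supN h) (by positivity) (by positivity) hsg hsh
    (by
      intro F hF
      have hinj : Function.Injective fun q : Fin d → ℤ => (S ^ n)ᵀ *ᵥ q := by
        refine Function.LeftInverse.injective (g := fun q => (S' ^ n)ᵀ *ᵥ q) fun q => ?_
        change (S' ^ n)ᵀ *ᵥ ((S ^ n)ᵀ *ᵥ q) = q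
        rw [mulVec_mulVec, ← transpose_mul, mul_eq_one_comm.1 hpow, transpose_one, one_mulVec]
      have h3 := h₁ (fun x => conj (g x)) hgL.star (by rwa [weightedLip_conj]) (c * σ ^ n) hR
        (F.map ⟨_, hinj⟩) (by
          intro q hq
          obtain ⟨q', hq', rfl⟩ := Finset.mem_map.1 hq
          have := hF q' hq'
          rwa [map_intCast_pow_mulVec] at this)
      rwa [Finset.sum_map, weightedLip_conj] at h3)
    (fun F hF => h₂ h hhL hh2 (c * σ ^ n) hR F hF) (norm_le_supN hg) (norm_le_supN hh)
  have hRη : (c * σ ^ n) ^ (-η) = c ^ (-η) * (σ ^ (-η)) ^ n := by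
    rw [Real.mul_rpow hc.le (by positivity), ← Real.rpow_natCast, ← Real.rpow_natCast,
      ← Real.rpow_mul hσ0.le, ← Real.rpow_mul hσ0.le, mul_comm (n : ℝ)]
  rw [hRη] at hcov
  refine hcov.trans ?_
  have hP : 0 ≤ c ^ (-η) * (σ ^ (-η)) ^ n := by positivity
  calc _ = c ^ (-η) * (σ ^ (-η)) ^ n * (Λ₁ * (supN h * k₁) + Λ₂ * (supN g * k₂)) := by ring
    _ ≤ c ^ (-η) * (σ ^ (-η)) ^ n *
        ((Λ₁ + Λ₂ + 1) * (supN h * k₁) + (Λ₁ + Λ₂ + 1) * (supN g * k₂)) := by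
      gcongr <;> linarith
    _ = _ := by ring

lemma exists_forall_pow_six_mul_le {τ : ℝ} (h0 : 0 ≤ τ) (h1 : τ < 1) (β : ℝ) {L : ℝ}
    (hL : 0 ≤ L) :
    ∃ B : ℝ, ∀ n : ℕ, 1 ≤ n → (n : ℝ) ^ 6 * (1 + (n : ℝ) ^ β) * (L * τ ^ n) ≤ B := by
  obtain ⟨p, hp⟩ := exists_nat_ge β
  obtain ⟨B, hB⟩ := (tendsto_pow_const_mul_const_pow_of_abs_lt_one (6 + p)
    (by rwa [abs_of_nonneg h0])).bddAbove_range
  refine ⟨2 * L * B, fun n hn => ?_⟩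
  have hn1 : (1 : ℝ) ≤ n := by exact_mod_cast hn
  have hB' : (n : ℝ) ^ (6 + p) * τ ^ n ≤ B := hB ⟨n, rfl⟩
  have hβ : (n : ℝ) ^ β ≤ (n : ℝ) ^ p := by
    rw [← Real.rpow_natCast]
    exact Real.rpow_le_rpow_of_exponent_le hn1 hp
  have hone : (1 : ℝ) ≤ (n : ℝ) ^ p := one_le_pow₀ hn1
  calc (n : ℝ) ^ 6 * (1 + (n : ℝ) ^ β) * (L * τ ^ n)
      ≤ (n : ℝ) ^ 6 * ((n : ℝ) ^ p + (n : ℝ) ^ p) * (L * τ ^ n) := by gcongr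
    _ = 2 * L * ((n : ℝ) ^ (6 + p) * τ ^ n) := by rw [pow_add]; ring
    _ ≤ 2 * L * B := by gcongr

lemma natCast_add_one_rpow_le {β : ℝ} (hβ : 0 ≤ β) {k m : ℕ} (hkm : k ≤ m) :
    ((k : ℝ) + 1) ^ β ≤ 2 ^ β * (1 + (m : ℝ) ^ β) := by
  have hkm' : (k : ℝ) ≤ m := by exact_mod_cast hkm
  have h2 : (1 : ℝ) ≤ 2 ^ β := Real.one_le_rpow one_le_two hβ
  have hm0 : (0 : ℝ) ≤ (m : ℝ) ^ β := by positivity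
  rcases Nat.eq_zero_or_pos m with rfl | hm
  · obtain rfl : k = 0 := Nat.le_zero.1 hkm
    rw [Nat.cast_zero] at hm0 ⊢
    rw [zero_add, Real.one_rpow]
    nlinarith
  · have hm1 : (1 : ℝ) ≤ m := by exact_mod_cast hm
    calc ((k : ℝ) + 1) ^ β ≤ (2 * m) ^ β := by gcongr; linarith
      _ = 2 ^ β * (m : ℝ) ^ β := Real.mul_rpow two_pos.le (by positivity)
      _ ≤ _ := by gcongr; linarith

end

/-- An ergodic algebraic automorphism of the torus satisfies Hypothesis H,
with `K⁽¹⁾` and `K⁽²⁾` dominated by the η-Hölder constant. -/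
theorem statement13 (d : ℕ) (hd : 2 ≤ d) (S : Matrix (Fin d) (Fin d) ℤ) (hdet : S.det = 1)
    (hEig : NoRootOfUnityEigenvalue S) (η : ℝ) (hη : 0 < η) :
    ∃ (K1 K2 : (Torus d → ℂ) → ℝ≥0∞) (c₀ : ℝ) (φ : ℕ → ℝ) (β : ℝ) (r : ℕ) (c : ℝ),
      0 ≤ β ∧ 0 < c ∧
      HypothesisH (volume : Measure (Torus d)) (torusAut S) (torusAut S⁻¹) c₀ φ
        (fun m : ℕ => (m : ℝ) ^ β) K1 K2 r ∧
      ∀ g : Torus d → ℂ, BddF g →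
        K1 g ≤ ENNReal.ofReal c * holderC η g ∧ K2 g ≤ ENNReal.ofReal c * holderC η g := by
  have hunit : IsUnit S.det := by rw [hdet]; exact isUnit_one
  have hinv : S⁻¹ * S = 1 := Matrix.nonsing_inv_mul S hunit
  have hinv' : S * S⁻¹ = 1 := Matrix.mul_nonsing_inv S hunit
  obtain ⟨Bu, Bs, K, D, c, σ, hK, hc, hσ, hBu, hBs, hdich⟩ :=
    exists_unstable_centreStable (Matrix.transpose S) (Matrix.transpose S⁻¹)
      (by rw [← Matrix.transpose_mul, hinv', Matrix.transpose_one])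
      (by
        intro z hz
        refine hEig z ?_
        rw [Matrix.charpoly_transpose] at hz
        have hmap : (S.map (fun a => (a : ℂ))).charpoly =
            S.charpoly.map (Int.castRingHom ℂ) := Matrix.charpoly_map S (Int.castRingHom ℂ)
        rw [hmap, Polynomial.IsRoot, Polynomial.eval_map]
        rwa [Polynomial.aeval_def] at hz)
  obtain ⟨L, hL, hcov⟩ := exists_norm_covC_le hinv hη hK hc hσ hBu hBs hdich
  set β : ℝ := D * η with hβ
  have hβ0 : 0 ≤ β := by positivity
  set τ : ℝ := σ ^ (-η) with hτ
  have hτ0 : 0 < τ := Real.rpow_pos_of_pos (one_pos.trans hσ) _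
  have hτ1 : τ < 1 := Real.rpow_lt_one_of_one_lt_of_neg hσ (by linarith)
  have h2β : (1 : ℝ) ≤ 2 ^ β := Real.one_le_rpow one_le_two hβ0
  refine ⟨weightedLip (orbitWeight S⁻¹ η 0), weightedLip (orbitWeight S η β), 2 ^ β,
    fun n => L * τ ^ n, β, 1, 1, hβ0, one_pos, ?_, fun g _ => ?_⟩
  swap
  · rw [ENNReal.ofReal_one, one_mul]
    exact ⟨weightedLip_le_holderC hη (ofReal_torusDist_le_orbitWeight _ η 0) g,
      weightedLip_le_holderC hη (ofReal_torusDist_le_orbitWeight _ η β) g⟩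
  have hpowpres : ∀ {A A' : Matrix (Fin d) (Fin d) ℤ}, A * A' = 1 → ∀ k : ℕ,
      MeasurePreserving (torusAut (A ^ k)) (volume : Measure (Torus d)) volume := by
    intro A A' h k
    rw [← torusAut_iterate]
    exact (measurePreserving_torusAut h).iterate k
  refine
    { measurable_T := (continuous_torusAut S).measurable
      measurable_Tinv := (continuous_torusAut S⁻¹).measurable
      left_inv := fun x => by rw [← torusAut_mul, hinv, torusAut_one]
      right_inv := fun x => by rw [← torusAut_mul, hinv', torusAut_one]
      measurePreserving_T := measurePreserving_torusAut hinv'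
      measurePreserving_Tinv := measurePreserving_torusAut hinv
      c₀_pos := by positivity
      cov_bound := fun g h hg hh n => ?_
      K1_comp := fun g _ m => ?_
      K2_comp := fun h _ m k hkm => ?_
      K1_mul := fun g g' => weightedLip_mul_le
      K2_mul := fun g g' => weightedLip_mul_le
      φ_anti := fun n => ?_
      r_pos := le_rfl
      sup_fin := by
        simpa only [mul_one] using exists_forall_pow_six_mul_le hτ0.le hτ1 β hL.le }
  · rw [torusAut_iterate]
    have hpos : ENNReal.ofReal (2 ^ β * (L * τ ^ n)) ≠ 0 :=
      (ENNReal.ofReal_pos.2 (by positivity)).ne'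
    rcases (supN_nonneg g).eq_or_lt with hg0 | hg0
    · rw [funext (eq_zero_of_supN_eq_zero hg hg0.symm), covC_zero_left]
      simp
    rcases (supN_nonneg h).eq_or_lt with hh0 | hh0
    · simp only [eq_zero_of_supN_eq_zero hh hh0.symm, covC_zero_right]
      simp
    by_cases h1 : weightedLip (orbitWeight S⁻¹ η 0) g = ∞
    · rw [h1, ENNReal.mul_top (ENNReal.ofReal_pos.2 hh0).ne', add_top, top_add,
        ENNReal.mul_top hpos]
      exact le_top
    by_cases h2 : weightedLip (orbitWeight S η β) h = ∞
    · rw [h2, ENNReal.mul_top (ENNReal.ofReal_pos.2 hg0).ne', add_top, ENNReal.mul_top hpos]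
      exact le_top
    have hb := hcov g h hg hh h1 h2 n
    set k₁ := (weightedLip (orbitWeight S⁻¹ η 0) g).toReal with hk₁
    set k₂ := (weightedLip (orbitWeight S η β) h).toReal with hk₂
    have hk₁0 : 0 ≤ k₁ := ENNReal.toReal_nonneg
    have hk₂0 : 0 ≤ k₂ := ENNReal.toReal_nonneg
    rw [← ENNReal.ofReal_toReal h1, ← ENNReal.ofReal_toReal h2, ← ENNReal.ofReal_mul hh0.le,
      ← ENNReal.ofReal_mul hg0.le, ← ENNReal.ofReal_add (by positivity) (by positivity),
      ← ENNReal.ofReal_add (by positivity) (by positivity),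
      ← ENNReal.ofReal_mul (by positivity)]
    refine ENNReal.ofReal_le_ofReal (hb.trans ?_)
    have hLτ : 0 ≤ L * τ ^ n := by positivity
    refine mul_le_mul (le_mul_of_one_le_left hLτ h2β) ?_ (by positivity) (by positivity)
    have : 0 ≤ supN g * supN h := by positivity
    linarith
  · rw [torusAut_iterate]
    refine (weightedLip_comp_le (hpowpres hinv m) one_ne_zero ENNReal.one_ne_top (fun x y => ?_)
      g).trans ?_
    · simpa using orbitWeight_torusAut_pow_le S⁻¹ η le_rfl m x y
    · gcongr
      rw [← ENNReal.ofReal_one]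
      exact ENNReal.ofReal_le_ofReal h2β
  · rw [torusAut_iterate]
    refine (weightedLip_comp_le (hpowpres hinv' k)
      (ENNReal.ofReal_pos.2 (by positivity : (0 : ℝ) < ((k : ℝ) + 1) ^ β)).ne'
      ENNReal.ofReal_ne_top (orbitWeight_torusAut_pow_le S η hβ0 k) h).trans ?_
    rw [mul_right_comm, ← ENNReal.ofReal_mul (by positivity)]
    gcongr
    exact natCast_add_one_rpow_le hβ0 hkm
  · have : τ ^ (n + 1) ≤ τ ^ n := pow_le_pow_of_le_one hτ0.le hτ1.le (Nat.le_succ n)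
    gcongr
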